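/- Let E be a real Banach space, let S : E → E be a compact continuous linear operator, and let t ∈ ℝ, t ≠ 0, be such that 1/t is an eigenvalue of S whose algebraic multiplicity — the dimension of the generalized eigenspace ⋃_{n≥1} ker((1/t)·I − S)^n, which is finite since S is compact — is odd. Let G : E → E be a continuous compact map satisfying ‖G(u)‖/‖u‖ → 0 as ‖u‖ → 0, and let Σ be the closure in ℝ × E of the set {(s,u) ∈ ℝ × E : u = s·S(u) + G(u), u ≠ 0}. Then the connected component C of Σ ∪ {(t,0)} containing the point (t,0) satisfies at least one of the following: (i) C is unbounded in ℝ × E; (ii) there exists t̂ ≠ t such that (t̂,0) ∈ C and 1/t̂ is an eigenvalue of S. -/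

import Mathlib

open Filter Topology

open MeasureTheory in
lemma bif_cramer {V ι : Type*} [AddCommGroup V] [Module ℝ V] [Fintype ι] [DecidableEq ι]
    (b : Module.Basis ι ℝ V) (v : ι → V) (y : V) :
    ∑ i, b.det (Function.update v i y) • v i = b.det v • y := by
  apply b.repr.injective
  ext k
  have h := congrFun (Matrix.mulVec_cramer (b.toMatrix v) (b.repr y)) k
  simp only [Matrix.mulVec, dotProduct, Matrix.cramer_apply, Pi.smul_apply, smul_eq_mul] at h
  simp only [map_sum, map_smul, Finsupp.coe_finsetSum, Finset.sum_apply, Finsupp.smul_apply,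
    smul_eq_mul, Module.Basis.det_apply, Module.Basis.toMatrix_update]
  rw [← h]
  refine Finset.sum_congr rfl fun i _ => ?_
  rw [mul_comm]; rfl

/-- basis determinant as continuous multilinear map -/
noncomputable def bifDet {V ι : Type*} [NormedAddCommGroup V] [NormedSpace ℝ V]
    [FiniteDimensional ℝ V] [Fintype ι] [DecidableEq ι]
    (b : Module.Basis ι ℝ V) : ContinuousMultilinearMap ℝ (fun _ : ι => V) ℝ :=
  { b.det.toMultilinearMap with
    cont := by
      change Continuous (fun v : ι → V => b.det v)
      simp only [Module.Basis.det_apply]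
      apply Continuous.matrix_det
      refine continuous_pi fun i => continuous_pi fun j => ?_
      have : Continuous (b.coord i) := LinearMap.continuous_of_finiteDimensional _
      exact this.comp (continuous_apply j) }

lemma bifDet_apply {V ι : Type*} [NormedAddCommGroup V] [NormedSpace ℝ V]
    [FiniteDimensional ℝ V] [Fintype ι] [DecidableEq ι]
    (b : Module.Basis ι ℝ V) (v : ι → V) : bifDet b v = b.det v := rfl

section calc1
variable {V ι : Type*} [NormedAddCommGroup V] [NormedSpace ℝ V]
    [FiniteDimensional ℝ V] [Fintype ι] [DecidableEq ι]

lemma bif_fderiv_X (b : Module.Basis ι ℝ V) (f h : V → V) (hf : ContDiff ℝ 2 f)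
    (hh : ContDiff ℝ 1 h) (i : ι) (x : V) :
    HasFDerivAt (fun x => bifDet b (Function.update (fun k => fderiv ℝ f x (b k)) i (h x)))
      (∑ k, ((bifDet b).toContinuousLinearMap
        (Function.update (fun k => fderiv ℝ f x (b k)) i (h x)) k) ∘L
        (if k = i then fderiv ℝ h x else (fderiv ℝ (fderiv ℝ f) x).flip (b k))) x := by
  have := HasFDerivAt.multilinear_comp (bifDet b) (x := x)
    (g := fun k x => Function.update (fun k => fderiv ℝ f x (b k)) i (h x) k)
    (g' := fun k => if k = i then fderiv ℝ h x else (fderiv ℝ (fderiv ℝ f) x).flip (b k)) ?_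
  · exact this
  · intro k
    by_cases hk : k = i
    · subst hk
      simp only [Function.update_self, if_true]
      exact (hh.differentiable one_ne_zero x).hasFDerivAt
    · simp only [Function.update_of_ne hk, if_neg hk]
      have h1 : ContDiff ℝ 1 (fderiv ℝ f) := hf.fderiv_right (by norm_num)
      have h2 := (h1.differentiable one_ne_zero x).hasFDerivAt
      have := h2.clm_apply (hasFDerivAt_const (b k) x)
      simpa using this

lemma bif_div (b : Module.Basis ι ℝ V) (f h : V → V) (hf : ContDiff ℝ 2 f)
    (hh : ContDiff ℝ 1 h) (x : V) :
    ∑ i, fderiv ℝ (fun x => bifDet b (Function.update (fun k => fderiv ℝ f x (b k)) i (h x))) x (b i)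
     = ∑ i, bifDet b (Function.update (fun k => fderiv ℝ f x (b k)) i (fderiv ℝ h x (b i))) := by
  set v : ι → V := fun k => fderiv ℝ f x (b k) with hv
  set H := fderiv ℝ (fderiv ℝ f) x with hH
  have hsymm : ∀ u w, H u w = H w u := by
    intro u w
    exact (hf.contDiffAt.isSymmSndFDerivAt (by simp)) u w
  have key : ∀ i, fderiv ℝ (fun x => bifDet b (Function.update (fun k => fderiv ℝ f x (b k)) i (h x))) x (b i)
      = bifDet b (Function.update v i (fderiv ℝ h x (b i)))
        + ∑ k, if k = i then 0 else
          b.det (Function.update (Function.update v i (h x)) k (H (b i) (b k))) := by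
    intro i
    rw [(bif_fderiv_X b f h hf hh i x).fderiv]
    simp only [sum_apply, ContinuousLinearMap.comp_apply]
    rw [← Finset.add_sum_erase _ _ (Finset.mem_univ i), ← Finset.add_sum_erase (a := i) (f := fun k => if k = i then (0:ℝ) else _) _ (Finset.mem_univ i)]
    simp only [if_true, zero_add]
    congr 1
    · change bifDet b (Function.update (Function.update v i (h x)) i _) = _
      simp
    · refine Finset.sum_congr rfl fun k hk => ?_
      have hk' : k ≠ i := Finset.ne_of_mem_erase hk
      simp only [if_neg hk']
      rfl
  simp only [key]
  rw [Finset.sum_add_distrib]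
  convert add_zero _
  have hanti : ∀ i k, (if k = i then 0 else
          b.det (Function.update (Function.update v i (h x)) k (H (b i) (b k))))
      = - (if i = k then 0 else
          b.det (Function.update (Function.update v k (h x)) i (H (b k) (b i)))) := by
    intro i k
    by_cases hik : k = i
    · simp [hik]
    · have hik' : ¬ i = k := fun e => hik e.symm
      simp only [if_neg hik, if_neg hik']
      rw [hsymm (b k) (b i)]
      rw [← b.det.map_swap _ (Ne.symm hik)]
      congr 1
      ext j
      simp only [Function.comp, Equiv.swap_apply_def, Function.update_apply]
      split_ifs <;> simp_all
  have : (∑ i, ∑ k, (if k = i then 0 else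
          b.det (Function.update (Function.update v i (h x)) k (H (b i) (b k)))))
      = - (∑ i, ∑ k, (if k = i then 0 else
          b.det (Function.update (Function.update v i (h x)) k (H (b i) (b k))))) := by
    conv_lhs => rw [Finset.sum_comm]
    rw [← Finset.sum_neg_distrib]
    refine Finset.sum_congr rfl fun i _ => ?_
    rw [← Finset.sum_neg_distrib]
    refine Finset.sum_congr rfl fun k _ => ?_
    exact hanti _ _
  linarith


open MeasureTheory in
lemma bif_integral_fderiv_zero [MeasurableSpace V] [BorelSpace V] (μ : Measure V)
    [μ.IsAddHaarMeasure] (Y : V → ℝ) (hY : ContDiff ℝ 1 Y) (hc : HasCompactSupport Y) (v : V) :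
    Integrable (fun x => fderiv ℝ Y x v) μ ∧ ∫ x, fderiv ℝ Y x v ∂μ = 0 := by
  have hcont : Continuous (fun x => fderiv ℝ Y x v) :=
    (hY.continuous_fderiv one_ne_zero).clm_apply continuous_const
  have hint : Integrable (fun x => fderiv ℝ Y x v) μ :=
    hcont.integrable_of_hasCompactSupport (hc.fderiv_apply (𝕜 := ℝ) v)
  refine ⟨hint, ?_⟩
  have := integral_mul_fderiv_eq_neg_fderiv_mul_of_integrable (μ := μ) (𝕜 := ℝ)
    (f := fun _ => (1:ℝ)) (g := Y) (v := v) (by simp) (by simpa using hint)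
    (by simpa using hY.continuous.integrable_of_hasCompactSupport hc) (by simp)
    (fun x _ => hY.differentiable one_ne_zero x)
  simpa using this

lemma bif_contDiff_X (b : Module.Basis ι ℝ V) (f h : V → V) (hf : ContDiff ℝ 2 f)
    (hh : ContDiff ℝ 1 h) (i : ι) :
    ContDiff ℝ 1 (fun x => bifDet b (Function.update (fun k => fderiv ℝ f x (b k)) i (h x))) := by
  have h1 : ContDiff ℝ 1 (fderiv ℝ f) := hf.fderiv_right (by norm_num)
  have h2 : ContDiff ℝ 1 (fun x => Function.update (fun k => fderiv ℝ f x (b k)) i (h x)) := by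
    rw [contDiff_pi]
    intro k
    by_cases hk : k = i
    · subst hk; simpa using hh
    · simp only [Function.update_of_ne hk]
      exact h1.clm_apply contDiff_const
  exact (bifDet b).contDiff.comp h2

/-- pointwise divergence identity with cutoff -/
lemma bif_div2 (b : Module.Basis ι ℝ V) (f h : V → V) (hf : ContDiff ℝ 2 f)
    (hh : ContDiff ℝ 1 h) (χ φ : V → ℝ) (hχ : ContDiff ℝ 1 χ) (hφ : ContDiff ℝ 1 φ) (x : V)
    (hx : φ (f x) ≠ 0 → fderiv ℝ χ x = 0) :
    ∑ i, fderiv ℝ (fun x => χ x * φ (f x) *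
      bifDet b (Function.update (fun k => fderiv ℝ f x (b k)) i (h x))) x (b i)
     = χ x * (fderiv ℝ φ (f x) (h x) * bifDet b (fun k => fderiv ℝ f x (b k))
       + φ (f x) * ∑ i, bifDet b
        (Function.update (fun k => fderiv ℝ f x (b k)) i (fderiv ℝ h x (b i)))) := by
  have hfd : DifferentiableAt ℝ f x := hf.differentiable two_ne_zero x
  have hφf : HasFDerivAt (fun x => φ (f x)) ((fderiv ℝ φ (f x)) ∘L (fderiv ℝ f x)) x :=
    (hφ.differentiable one_ne_zero (f x)).hasFDerivAt.comp x hfd.hasFDerivAt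
  have h1 := (hχ.differentiable one_ne_zero x).hasFDerivAt.mul hφf
  have key : ∀ i, fderiv ℝ (fun x => χ x * φ (f x) *
      bifDet b (Function.update (fun k => fderiv ℝ f x (b k)) i (h x))) x (b i)
      = χ x * φ (f x) * fderiv ℝ (fun x => bifDet b (Function.update (fun k => fderiv ℝ f x (b k)) i (h x))) x (b i)
       + χ x * fderiv ℝ φ (f x) (bifDet b (Function.update (fun k => fderiv ℝ f x (b k)) i (h x)) • fderiv ℝ f x (b i)) := by
    intro i
    have h2 := h1.mul ((bif_contDiff_X b f h hf hh i).differentiable one_ne_zero x).hasFDerivAt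
    have h3 := h2.fderiv
    simp only [Pi.mul_def] at h3
    rw [h3]
    have hz : φ (f x) * fderiv ℝ χ x (b i) = 0 := by
      by_cases h0 : φ (f x) = 0
      · simp [h0]
      · simp [hx h0]
    simp only [add_apply, smul_apply, ContinuousLinearMap.comp_apply, smul_eq_mul,
      map_smul]
    linear_combination (bifDet b (Function.update (fun k => fderiv ℝ f x (b k)) i (h x))) * hz
  simp only [key]
  rw [Finset.sum_add_distrib, ← Finset.mul_sum, ← Finset.mul_sum, bif_div b f h hf hh x, ← map_sum (fderiv ℝ φ (f x))]
  have hcr := bif_cramer b (fun k => fderiv ℝ f x (b k)) (h x)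
  simp only [bifDet_apply]
  rw [hcr, map_smul, smul_eq_mul]
  ring

open MeasureTheory in
lemma bif_integral_const [MeasurableSpace V] [BorelSpace V] (μ : Measure V)
    [μ.IsAddHaarMeasure] (b : Module.Basis ι ℝ V) (g h : V → V) (hg : ContDiff ℝ 2 g)
    (hh : ContDiff ℝ 2 h) (χ φ : V → ℝ) (hχ : ContDiff ℝ 1 χ) (hχc : HasCompactSupport χ)
    (hφ : ContDiff ℝ 1 φ)
    (hyp : ∀ τ ∈ Set.Icc (0:ℝ) 1, ∀ x, φ (g x + τ • h x) ≠ 0 → fderiv ℝ χ x = 0) :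
    ∫ x, χ x * φ (g x) * bifDet b (fun k => fderiv ℝ g x (b k)) ∂μ =
    ∫ x, χ x * φ (g x + h x) * bifDet b (fun k => fderiv ℝ (fun y => g y + h y) x (b k)) ∂μ := by
  have hg' : Continuous (fderiv ℝ g) := hg.continuous_fderiv two_ne_zero
  have hh' : Continuous (fderiv ℝ h) := hh.continuous_fderiv two_ne_zero
  have hφ' : Continuous (fderiv ℝ φ) := hφ.continuous_fderiv one_ne_zero
  have hgc := hg.continuous
  have hhc := hh.continuous
  have hφc := hφ.continuous
  have hχcc := hχ.continuous
  set v : ℝ → V → ι → V := fun τ x k => fderiv ℝ g x (b k) + τ • fderiv ℝ h x (b k) with hv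
  have hvc : Continuous (fun p : ℝ × V => v p.1 p.2) := by
    refine continuous_pi fun k => ?_
    have := hg'.clm_apply (continuous_const (y := b k))
    have := hh'.clm_apply (continuous_const (y := b k))
    simp only [hv]
    fun_prop
  have hfd : ∀ (τ : ℝ) (x w : V), fderiv ℝ (fun y => g y + τ • h y) x w = fderiv ℝ g x w + τ • fderiv ℝ h x w := by
    intro τ x w
    have h1 := (hg.differentiable two_ne_zero x).hasFDerivAt
    have h2 := (hh.differentiable two_ne_zero x).hasFDerivAt
    have := (h1.add (h2.const_smul τ)).fderiv
    have h3 : fderiv ℝ (fun y => g y + τ • h y) x = fderiv ℝ g x + τ • fderiv ℝ h x := this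
    rw [h3]; rfl
  set F : ℝ → V → ℝ := fun τ x => χ x * φ (g x + τ • h x) * bifDet b (v τ x) with hF
  set F' : ℝ → V → ℝ := fun τ x => χ x * (fderiv ℝ φ (g x + τ • h x) (h x) * bifDet b (v τ x)
       + φ (g x + τ • h x) * ∑ i, bifDet b
        (Function.update (v τ x) i (fderiv ℝ h x (b i)))) with hF'
  have hFc : Continuous (fun p : ℝ × V => F p.1 p.2) := by
    have := (bifDet b).cont.comp hvc
    simp only [hF]
    apply Continuous.mul _ this
    fun_prop
  have hF'c : Continuous (fun p : ℝ × V => F' p.1 p.2) := by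
    have h1 := (bifDet b).cont.comp hvc
    have h2 : Continuous (fun p : ℝ × V => fderiv ℝ φ (g p.2 + p.1 • h p.2) (h p.2)) := by
      apply Continuous.clm_apply
      · apply hφ'.comp; fun_prop
      · fun_prop
    have h3 : ∀ i, Continuous (fun p : ℝ × V => bifDet b (Function.update (v p.1 p.2) i (fderiv ℝ h p.2 (b i)))) := by
      intro i
      apply (bifDet b).cont.comp
      apply hvc.update
      exact (hh'.clm_apply (continuous_const (y := b i))).comp continuous_snd
    simp only [hF']
    apply Continuous.mul (by fun_prop)
    apply Continuous.add
    · exact h2.mul h1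
    · apply Continuous.mul (by fun_prop)
      exact continuous_finsetSum _ fun i _ => h3 i
  have hderiv : ∀ τ x, HasDerivAt (fun τ => F τ x) (F' τ x) τ := by
    intro τ x
    have hlin : HasDerivAt (fun τ : ℝ => g x + τ • h x) (h x) τ := by
      simpa using ((hasDerivAt_id τ).smul_const (h x)).const_add (g x)
    have h1 := (hφ.differentiable one_ne_zero (g x + τ • h x)).hasFDerivAt.comp_hasDerivAt τ hlin
    have hv' : HasDerivAt (fun τ => v τ x) (fun k => fderiv ℝ h x (b k)) τ := by
      rw [hasDerivAt_pi]
      intro k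
      simpa [hv] using ((hasDerivAt_id τ).smul_const (fderiv ℝ h x (b k))).const_add (fderiv ℝ g x (b k))
    have h2 := ((bifDet b).hasFDerivAt (x := v τ x)).comp_hasDerivAt τ hv'
    have h3 := (h1.const_mul (χ x)).mul h2
    rw [ContinuousMultilinearMap.linearDeriv_apply] at h3
    refine h3.congr_deriv ?_
    simp only [hF', Function.comp]
    ring
  have hFsupp : ∀ τ x, x ∉ tsupport χ → F τ x = 0 := by
    intro τ x hx
    simp [hF, image_eq_zero_of_notMem_tsupport hx]
  have hF'supp : ∀ τ x, x ∉ tsupport χ → F' τ x = 0 := by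
    intro τ x hx
    simp [hF', image_eq_zero_of_notMem_tsupport hx]
  have hInt : ∀ τ, Integrable (F τ) μ := fun τ =>
    (hFc.comp (Continuous.prodMk_right τ)).integrable_of_hasCompactSupport
      (HasCompactSupport.intro hχc (hFsupp τ))
  have hJ : ∀ τ, HasDerivAt (fun τ => ∫ x, F τ x ∂μ) (∫ x, F' τ x ∂μ) τ := by
    intro τ
    obtain ⟨M, hM⟩ := ((isCompact_Icc (a := τ - 1) (b := τ + 1)).prod hχc).exists_bound_of_continuousOn
      hF'c.continuousOn
    have := hasDerivAt_integral_of_dominated_loc_of_deriv_le (μ := μ) (F := F) (F' := F') (x₀ := τ)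
      (s := Set.Icc (τ-1) (τ+1)) (bound := (tsupport χ).indicator (fun _ => M))
      (Icc_mem_nhds (by linarith) (by linarith))
      (Eventually.of_forall fun τ => (hInt τ).aestronglyMeasurable) (hInt τ)
      (hF'c.comp (Continuous.prodMk_right τ)).aestronglyMeasurable
      (Eventually.of_forall fun x τ' hτ' => by
        by_cases hx : x ∈ tsupport χ
        · rw [Set.indicator_of_mem hx]
          exact hM (τ', x) ⟨hτ', hx⟩
        · rw [Set.indicator_of_notMem hx, hF'supp _ _ hx]; simp)
      ((integrable_indicator_iff (isClosed_tsupport χ).measurableSet).2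
        (integrableOn_const (hχc.measure_lt_top).ne))
      (Eventually.of_forall fun x τ' _ => hderiv τ' x)
    exact this.2
  have hzero : ∀ τ ∈ Set.Icc (0:ℝ) 1, ∫ x, F' τ x ∂μ = 0 := by
    intro τ hτ
    have hf2 : ContDiff ℝ 2 (fun y => g y + τ • h y) := hg.add (contDiff_const.smul hh)
    have hh1 : ContDiff ℝ 1 h := hh.of_le (by norm_num)
    have e : ∀ x, F' τ x = ∑ i, fderiv ℝ (fun x => χ x * φ (g x + τ • h x) *
      bifDet b (Function.update (fun k => fderiv ℝ (fun y => g y + τ • h y) x (b k)) i (h x))) x (b i) := by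
      intro x
      rw [bif_div2 b (fun y => g y + τ • h y) h hf2 hh1 χ φ hχ hφ x (hyp τ hτ x)]
      simp only [hfd, hF', hv]
    have hY : ∀ i, _ := fun i => bif_integral_fderiv_zero μ (fun x => χ x * φ (g x + τ • h x) *
      bifDet b (Function.update (fun k => fderiv ℝ (fun y => g y + τ • h y) x (b k)) i (h x)))
      ((hχ.mul (hφ.comp (hf2.of_le (by norm_num)))).mul (bif_contDiff_X b _ h hf2 hh1 i))
      ((hχc.mul_right).mul_right) (b i)
    simp_rw [e]
    rw [integral_finsetSum _ fun i _ => (hY i).1]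
    exact Finset.sum_eq_zero fun i _ => (hY i).2
  have hconst := constant_of_has_deriv_right_zero (f := fun τ => ∫ x, F τ x ∂μ) (a := 0) (b := 1)
    (fun τ _ => (hJ τ).continuousAt.continuousWithinAt)
    (fun τ hτ => by
      have := (hJ τ).hasDerivWithinAt (s := Set.Ici τ)
      rwa [hzero τ ⟨hτ.1, hτ.2.le⟩] at this) 1 (by simp)
  have h0 : ∀ x, F 0 x = χ x * φ (g x) * bifDet b (fun k => fderiv ℝ g x (b k)) := by
    intro x; simp [hF, hv]
  have h1 : ∀ x, F 1 x = χ x * φ (g x + h x) * bifDet b (fun k => fderiv ℝ (fun y => g y + h y) x (b k)) := by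
    intro x
    have := hfd 1 x
    simp only [one_smul] at this
    simp [hF, hv, this]
  simp only [h0, h1] at hconst
  exact hconst.symm
end calc1

section deg
variable {V ι : Type*} [NormedAddCommGroup V] [NormedSpace ℝ V]
    [FiniteDimensional ℝ V] [Fintype ι] [DecidableEq ι] [MeasurableSpace V] [BorelSpace V]

open MeasureTheory

/-- "the Brouwer degree of f on U vanishes" in integral form. -/
def BifZero (μ : Measure V) (b : Module.Basis ι ℝ V) (f : V → V) (U : Set V) : Prop :=
  ∃ δ > 0, ∀ g : V → V, ContDiff ℝ 2 g → (∀ x, dist (g x) (f x) < δ) →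
    ∀ φ : V → ℝ, ContDiff ℝ 1 φ → (∀ y, δ ≤ ‖y‖ → φ y = 0) →
      ∫ x in U, φ (g x) * bifDet b (fun k => fderiv ℝ g x (b k)) ∂μ = 0

lemma BifZero.of_ne (μ : Measure V) (b : Module.Basis ι ℝ V) (f : V → V) (hf : Continuous f)
    (U : Set V) (hU : IsOpen U) (hUb : Bornology.IsBounded U) (hne : ∀ x ∈ closure U, f x ≠ 0) :
    BifZero μ b f U := by
  have hK : IsCompact (closure U) := hUb.isCompact_closure
  obtain ⟨m, hm, hmf⟩ := hK.exists_forall_le' (f := fun x => ‖f x‖) hf.norm.continuousOn (a := 0)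
    (fun x hx => norm_pos_iff.2 (hne x hx))
  refine ⟨m / 2, by positivity, fun g _ hgf φ _ hφ => ?_⟩
  rw [setIntegral_congr_fun (g := fun _ => 0) hU.measurableSet]
  · simp
  intro x hx
  have h1 := hmf x (subset_closure hx)
  have h2 := hgf x
  rw [dist_eq_norm] at h2
  have h3 : ‖f x‖ - ‖g x‖ ≤ ‖g x - f x‖ := by
    rw [norm_sub_rev]; exact norm_sub_norm_le _ _
  have := hφ (g x) (by linarith)
  simp [this]

lemma BifZero.excise {μ : Measure V} {b : Module.Basis ι ℝ V} {f : V → V} (hf : Continuous f)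
    {U U' : Set V} (hU : IsOpen U) (hUb : Bornology.IsBounded U) (hU' : IsOpen U') (hUU' : U' ⊆ U)
    (hne : ∀ x ∈ closure U, x ∉ U' → f x ≠ 0) (h : BifZero μ b f U) :
    BifZero μ b f U' := by
  obtain ⟨δ, hδ, H⟩ := h
  have hK : IsCompact (closure U \ U') := hUb.isCompact_closure.diff hU'
  obtain ⟨m, hm, hmf⟩ := hK.exists_forall_le' (f := fun x => ‖f x‖) hf.norm.continuousOn (a := 0)
    (fun x hx => norm_pos_iff.2 (hne x hx.1 hx.2))
  refine ⟨min δ (m / 2), by positivity, fun g hg hgf φ hφ1 hφ => ?_⟩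
  rw [← H g hg (fun x => (hgf x).trans_le (min_le_left _ _)) φ hφ1
    (fun y hy => hφ y ((min_le_left _ _).trans hy))]
  refine setIntegral_eq_of_subset_of_forall_sdiff_eq_zero hU.measurableSet hUU' ?_ |>.symm
  intro x hx
  have h1 := hmf x ⟨subset_closure hx.1, hx.2⟩
  have h2 := (hgf x).trans_le (min_le_right _ _)
  rw [dist_eq_norm] at h2
  have h3 : ‖f x‖ - ‖g x‖ ≤ ‖g x - f x‖ := by
    rw [norm_sub_rev]; exact norm_sub_norm_le _ _
  have := hφ (g x) ((min_le_right _ _).trans (by linarith))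
  simp [this]

open scoped Manifold in
lemma BifZero.homotopy {μ : Measure V} [μ.IsAddHaarMeasure] {b : Module.Basis ι ℝ V}
    {f₀ f₁ : V → V} (hf₀ : Continuous f₀) (hf₁ : Continuous f₁)
    {U : Set V} (hU : IsOpen U) (hUb : Bornology.IsBounded U)
    (hne : ∀ τ ∈ Set.Icc (0:ℝ) 1, ∀ x ∈ closure U, x ∉ U → (1 - τ) • f₀ x + τ • f₁ x ≠ 0)
    (h : BifZero μ b f₀ U) :
    BifZero μ b f₁ U := by
  obtain ⟨δ, hδ, H⟩ := h
  have hcl : IsCompact (closure U) := hUb.isCompact_closure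
  have hF : Continuous (fun p : ℝ × V => ‖(1 - p.1) • f₀ p.2 + p.1 • f₁ p.2‖) := by fun_prop
  obtain ⟨m, hm, hmf⟩ := ((isCompact_Icc (a := (0:ℝ)) (b := 1)).prod (hcl.diff hU)).exists_forall_le'
    hF.continuousOn (a := 0) (fun p hp => norm_pos_iff.2 (hne p.1 hp.1 p.2 hp.2.1 hp.2.2))
  set K : Set V := Prod.snd '' ((Set.Icc (0:ℝ) 1 ×ˢ closure U) ∩
    {p | ‖(1 - p.1) • f₀ p.2 + p.1 • f₁ p.2‖ ≤ m / 2}) with hKdef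
  have hK : IsCompact K :=
    (((isCompact_Icc).prod hcl).inter_right (isClosed_le hF continuous_const)).image continuous_snd
  have hKU : K ⊆ U := by
    rintro x ⟨⟨τ, x⟩, ⟨⟨h1, h2⟩, h3⟩, rfl⟩
    by_contra hx
    have := hmf (τ, x) ⟨h1, h2, hx⟩
    simp only [Set.mem_ofPred_eq] at h3
    linarith
  obtain ⟨χ, hχ1, hχ0, -⟩ := exists_contMDiffMap_one_nhds_of_subset_interior 𝓘(ℝ, V) (n := 1)
    hK.isClosed (t := U) (by rwa [hU.interior_eq])
  have hχd : ContDiff ℝ 1 χ := χ.contMDiff.contDiff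
  have hχc : HasCompactSupport χ := by
    refine HasCompactSupport.intro hcl fun x hx => hχ0 x fun h => hx (subset_closure h)
  set η := min δ (m / 4) with hη
  have hη0 : 0 < η := by positivity
  obtain ⟨g₀, hg₀, hgf₀, -⟩ := hf₀.exists_contDiff_approx 2 (ε := fun _ => η) continuous_const
    (fun _ => hη0)
  replace hg₀ : ContDiff ℝ 2 g₀ := hg₀
  refine ⟨η, hη0, fun g₁ hg₁ hgf₁ φ hφ1 hφ => ?_⟩
  have hclose : ∀ τ ∈ Set.Icc (0:ℝ) 1, ∀ x, ‖(1 - τ) • f₀ x + τ • f₁ x‖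
      ≤ ‖(1 - τ) • g₀ x + τ • g₁ x‖ + η := by
    intro τ hτ x
    have e : (1 - τ) • f₀ x + τ • f₁ x = ((1 - τ) • g₀ x + τ • g₁ x)
      + ((1 - τ) • (f₀ x - g₀ x) + τ • (f₁ x - g₁ x)) := by
      simp only [smul_sub]; abel
    rw [e]
    refine (norm_add_le _ _).trans (add_le_add le_rfl ((norm_add_le _ _).trans ?_))
    have h1 := (hgf₀ x).le
    have h2 := (hgf₁ x).le
    rw [dist_comm, dist_eq_norm] at h1 h2
    rw [norm_smul, norm_smul, Real.norm_of_nonneg hτ.1, Real.norm_of_nonneg (by linarith [hτ.2])]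
    nlinarith [hτ.1, hτ.2, mul_le_mul_of_nonneg_left h1 (sub_nonneg.2 hτ.2), mul_le_mul_of_nonneg_left h2 hτ.1]
  have hinK : ∀ τ ∈ Set.Icc (0:ℝ) 1, ∀ x ∈ closure U, φ ((1 - τ) • g₀ x + τ • g₁ x) ≠ 0 → x ∈ K := by
    intro τ hτ x hx hne
    refine ⟨(τ, x), ⟨⟨hτ, hx⟩, ?_⟩, rfl⟩
    have h1 : ‖(1 - τ) • g₀ x + τ • g₁ x‖ < η := by
      by_contra hcon
      exact hne (hφ _ (not_lt.1 hcon))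
    have := hclose τ hτ x
    have h4 : η ≤ m / 4 := min_le_right _ _
    simp only [Set.mem_ofPred_eq]
    linarith
  have hset : ∀ g : V → V, (∀ x ∈ closure U, φ (g x) ≠ 0 → x ∈ K) →
      ∫ x in U, φ (g x) * bifDet b (fun k => fderiv ℝ g x (b k)) ∂μ =
      ∫ x, χ x * φ (g x) * bifDet b (fun k => fderiv ℝ g x (b k)) ∂μ := by
    intro g hg
    rw [← integral_indicator hU.measurableSet]
    congr 1
    ext x
    by_cases hx : x ∈ U
    · rw [Set.indicator_of_mem hx]
      by_cases h0 : φ (g x) = 0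
      · simp [h0]
      · have := hχ1.self_of_nhdsSet x (hg x (subset_closure hx) h0)
        rw [this]; ring
    · rw [Set.indicator_of_notMem hx, hχ0 x hx]; simp
  have hz := H g₀ hg₀ (fun x => (hgf₀ x).trans_le (min_le_left _ _)) φ hφ1
    (fun y hy => hφ y ((min_le_left _ _).trans hy))
  have e0 : ∀ x ∈ closure U, φ (g₀ x) ≠ 0 → x ∈ K := fun x hx h => hinK 0 (by simp) x hx (by simpa using h)
  have e1 : ∀ x ∈ closure U, φ (g₁ x) ≠ 0 → x ∈ K := fun x hx h => hinK 1 (by simp) x hx (by simpa using h)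
  rw [hset g₁ e1]
  rw [hset g₀ e0] at hz
  have hmain := bif_integral_const μ b g₀ (fun x => g₁ x - g₀ x) hg₀ (hg₁.sub hg₀) χ φ hχd hχc hφ1 ?_
  · rw [hz] at hmain
    simp only [add_sub_cancel] at hmain
    exact hmain.symm
  · intro τ hτ x hx
    have e : g₀ x + τ • (g₁ x - g₀ x) = (1 - τ) • g₀ x + τ • g₁ x := by
      rw [smul_sub, sub_smul, one_smul]; abel
    rw [e] at hx
    by_cases hxU : x ∈ closure U
    · have hk := hinK τ hτ x hxU hx
      have : χ =ᶠ[𝓝 x] fun _ => 1 := by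
        have := (mem_nhdsSet_iff_forall.1 hχ1) x hk
        exact this
      rw [this.fderiv_eq]; simp
    · have : χ =ᶠ[𝓝 x] fun _ => 0 := by
        filter_upwards [isClosed_closure.isOpen_compl.mem_nhds hxU] with y hy
        exact hχ0 y fun h => hy (subset_closure h)
      rw [this.fderiv_eq]; simp

lemma BifZero.not_of_pos {μ : Measure V} [μ.IsAddHaarMeasure] {b : Module.Basis ι ℝ V}
    {f : V → V} (hf : ContDiff ℝ 2 f)
    {U : Set V} (hU : IsOpen U) (hUb : Bornology.IsBounded U) (c : ℝ)
    (hpos : ∀ x ∈ closure U, f x = 0 → 0 < c * bifDet b (fun k => fderiv ℝ f x (b k)))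
    (hne : ∀ x ∈ closure U, x ∉ U → f x ≠ 0) (x₀ : V) (hx₀ : x₀ ∈ U) (hfx₀ : f x₀ = 0) :
    ¬ BifZero μ b f U := by
  rintro ⟨δ, hδ, H⟩
  have hcl : IsCompact (closure U) := hUb.isCompact_closure
  have hf' : Continuous (fderiv ℝ f) := hf.continuous_fderiv two_ne_zero
  have hdet : Continuous (fun x => c * bifDet b (fun k => fderiv ℝ f x (b k))) := by
    apply continuous_const.mul
    apply (bifDet b).cont.comp
    exact continuous_pi fun k => hf'.clm_apply continuous_const
  have hB : IsCompact (closure U ∩ {x | c * bifDet b (fun k => fderiv ℝ f x (b k)) ≤ 0}) :=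
    hcl.inter_right (isClosed_le hdet continuous_const)
  obtain ⟨m, hm, hmf⟩ := hB.exists_forall_le' (f := fun x => ‖f x‖)
    hf.continuous.norm.continuousOn (a := 0)
    (fun x hx => norm_pos_iff.2 (fun h => absurd (hpos x hx.1 h) (not_lt.2 hx.2)))
  have hr : 0 < min δ m := by positivity
  let φ : ContDiffBump (0 : V) := ⟨min δ m / 2, min δ m, by positivity, by linarith⟩
  have hφ0 : ∀ y, min δ m ≤ ‖y‖ → φ y = 0 := fun y hy => φ.zero_of_le_dist (by rw [dist_zero_right]; exact hy)
  have hz := H f hf (by simpa using hδ) φ φ.contDiff (fun y hy => hφ0 y ((min_le_left _ _).trans hy))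
  have hz2 : ∫ x in U, φ (f x) * (c * bifDet b (fun k => fderiv ℝ f x (b k))) ∂μ = 0 := by
    have : ∀ x, φ (f x) * (c * bifDet b (fun k => fderiv ℝ f x (b k))) =
      c * (φ (f x) * bifDet b (fun k => fderiv ℝ f x (b k))) := fun x => by ring
    simp_rw [this]
    rw [integral_const_mul, hz, mul_zero]
  have hcont : Continuous (fun x => φ (f x) * (c * bifDet b (fun k => fderiv ℝ f x (b k)))) :=
    (φ.continuous.comp hf.continuous).mul hdet
  have hint : IntegrableOn (fun x => φ (f x) * (c * bifDet b (fun k => fderiv ℝ f x (b k)))) U μ :=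
    (hcont.continuousOn.integrableOn_compact hcl).mono_set subset_closure
  have hnn : ∀ x ∈ U, 0 ≤ φ (f x) * (c * bifDet b (fun k => fderiv ℝ f x (b k))) := by
    intro x hx
    by_cases hd : c * bifDet b (fun k => fderiv ℝ f x (b k)) ≤ 0
    · rw [hφ0 (f x) ((min_le_right _ _).trans (hmf x ⟨subset_closure hx, hd⟩)), zero_mul]
    · exact mul_nonneg φ.nonneg (not_le.1 hd).le
  have := (setIntegral_pos_iff_support_of_nonneg_ae
    (ae_restrict_of_forall_mem hU.measurableSet hnn) hint).2 ?_
  · linarith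
  · have ho : IsOpen (Function.support (fun x => φ (f x) * (c * bifDet b (fun k => fderiv ℝ f x (b k)))) ∩ U) :=
      hcont.isOpen_support.inter hU
    refine ho.measure_pos μ ⟨x₀, ?_, hx₀⟩
    have h1 := hpos x₀ (subset_closure hx₀) hfx₀
    have h2 : 0 < φ (f x₀) := by
      rw [hfx₀]; exact φ.pos_of_mem_ball (by simpa [φ] using hr)
    exact (mul_pos h2 h1).ne'
end deg

open MeasureTheory in
lemma bif_fd {W : Type*} [NormedAddCommGroup W] [NormedSpace ℝ W] [FiniteDimensional ℝ W]
    (A : W →L[ℝ] W) (R : ℝ × W → W) (hR : Continuous R) (Ω : Set (ℝ × W)) (hΩ : IsOpen Ω)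
    (hΩb : Bornology.IsBounded Ω) (t ε ρ r : ℝ) (hε : 0 < ε) (hr : 0 < r) (hrρ : r < ρ)
    (hUΩ : ∀ x : ℝ × W, |x.1 - t| < ε → ‖x.2‖ < ρ → x ∈ Ω)
    (h1 : ∀ x ∈ closure Ω, x ∉ Ω → r ≤ ‖x.2‖ → x.2 - x.1 • A x.2 - R x ≠ 0)
    (h2 : ∀ x ∈ closure Ω, ¬ (|x.1 - t| < ε ∧ ‖x.2‖ < ρ) → ‖x.2‖ = r → x.2 - x.1 • A x.2 - R x ≠ 0)
    (h3 : ∀ σ ∈ Set.Icc (0:ℝ) 1, ∀ x : ℝ × W, |x.1 - t| = ε → ‖x.2‖ = r →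
      x.2 - x.1 • A x.2 - σ • R x ≠ 0)
    (h4 : ∀ s : ℝ, s ≠ t → ∀ w : W, w - s • A w = 0 → w = 0)
    (h5 : LinearMap.det ((1 : W →L[ℝ] W) - (t + ε / 2) • A : W →L[ℝ] W).toLinearMap *
      LinearMap.det ((1 : W →L[ℝ] W) - (t - ε / 2) • A : W →L[ℝ] W).toLinearMap < 0) : False := by
  letI : MeasurableSpace (ℝ × W) := borel _
  haveI : BorelSpace (ℝ × W) := ⟨rfl⟩
  let b := Module.finBasis ℝ (ℝ × W)
  let μ : Measure (ℝ × W) := Measure.addHaar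
  obtain ⟨M, hM⟩ := hΩb.exists_norm_le
  -- the sets
  set U : Set (ℝ × W) := {x | |x.1 - t| < ε ∧ ‖x.2‖ < ρ} with hUdef
  have hU : IsOpen U := by
    apply IsOpen.inter
    · exact isOpen_lt (f := fun x : ℝ × W => |x.1 - t|) (g := fun _ => ε) (by fun_prop) (by fun_prop)
    · exact isOpen_lt (f := fun x : ℝ × W => ‖x.2‖) (g := fun _ => ρ) (by fun_prop) (by fun_prop)
  have hUsub : U ⊆ Ω := fun x hx => hUΩ x hx.1 hx.2
  have hUb : Bornology.IsBounded U := hΩb.subset hUsub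
  have hUcl : ∀ x ∈ closure U, |x.1 - t| ≤ ε ∧ ‖x.2‖ ≤ ρ := by
    have : closure U ⊆ {x | |x.1 - t| ≤ ε ∧ ‖x.2‖ ≤ ρ} := by
      apply closure_minimal
      · intro x hx; exact ⟨hx.1.le, hx.2.le⟩
      · apply IsClosed.inter
        · exact isClosed_le (f := fun x : ℝ × W => |x.1 - t|) (g := fun _ => ε) (by fun_prop) (by fun_prop)
        · exact isClosed_le (f := fun x : ℝ × W => ‖x.2‖) (g := fun _ => ρ) (by fun_prop) (by fun_prop)
    exact fun x hx => this hx
  have hUbd : ∀ x ∈ closure U, x ∉ U → |x.1 - t| = ε ∨ ‖x.2‖ = ρ := by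
    intro x hx hxU
    obtain ⟨ha, hb⟩ := hUcl x hx
    by_contra hcon
    push Not at hcon
    exact hxU ⟨lt_of_le_of_ne ha hcon.1, lt_of_le_of_ne hb hcon.2⟩
  have hMcl : ∀ x ∈ closure Ω, ‖x‖ ≤ M := by
    have : closure Ω ⊆ {x | ‖x‖ ≤ M} :=
      closure_minimal (fun x hx => hM x hx) (isClosed_le (by fun_prop) (by fun_prop))
    exact fun x hx => this hx
  -- stage 0
  have z0 : BifZero μ b (fun x : ℝ × W => (‖x.2‖ - max (M + 1) r, x.2 - x.1 • A x.2 - R x)) Ω := by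
    apply BifZero.of_ne _ _ _ (by fun_prop) _ hΩ hΩb
    intro x hx h0
    have e := (Prod.ext_iff.1 h0).1
    simp only [Prod.fst_zero] at e
    have h5 := (norm_snd_le x).trans (hMcl x hx)
    have := le_max_left (M + 1) r
    linarith
  -- stage 1
  have z1 : BifZero μ b (fun x : ℝ × W => (‖x.2‖ - r, x.2 - x.1 • A x.2 - R x)) Ω := by
    refine BifZero.homotopy (by fun_prop) (by fun_prop) hΩ hΩb ?_ z0
    intro τ hτ x hx hxΩ h0
    have e1 := (Prod.ext_iff.1 h0).1
    have e2 := (Prod.ext_iff.1 h0).2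
    simp only [Prod.fst_zero, Prod.snd_zero, Prod.fst_add, Prod.snd_add, Prod.smul_fst, Prod.smul_snd, smul_eq_mul] at e1 e2
    rw [← add_smul, sub_add_cancel, one_smul] at e2
    refine h1 x hx hxΩ ?_ e2
    have := le_max_right (M + 1) r
    nlinarith [hτ.1, hτ.2, mul_nonneg (sub_nonneg.2 hτ.2) (sub_nonneg.2 this)]
  -- stage 2
  have z2 : BifZero μ b (fun x : ℝ × W => (‖x.2‖ - r, x.2 - x.1 • A x.2 - R x)) U := by
    refine BifZero.excise (by fun_prop) hΩ hΩb hU hUsub ?_ z1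
    intro x hx hxU h0
    have e1 := (Prod.ext_iff.1 h0).1
    have e2 := (Prod.ext_iff.1 h0).2
    simp only [Prod.fst_zero, Prod.snd_zero] at e1 e2
    exact h2 x hx hxU (by linarith) e2
  -- stage 3
  have z3 : BifZero μ b (fun x : ℝ × W => (‖x.2‖ - r, x.2 - x.1 • A x.2)) U := by
    refine BifZero.homotopy (by fun_prop) (by fun_prop) hU hUb ?_ z2
    intro τ hτ x hx hxU h0
    have e1 := (Prod.ext_iff.1 h0).1
    have e2 := (Prod.ext_iff.1 h0).2
    simp only [Prod.fst_zero, Prod.snd_zero, Prod.fst_add, Prod.snd_add, Prod.smul_fst, Prod.smul_snd, smul_eq_mul] at e1 e2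
    have e1' : ‖x.2‖ = r := by linarith
    rcases hUbd x hx hxU with hh | hh
    · refine h3 (1 - τ) ⟨by linarith [hτ.2], by linarith [hτ.1]⟩ x hh e1' ?_
      rw [← e2]
      module
    · linarith
  -- stage 4
  have z4 : BifZero μ b (fun x : ℝ × W => ((ε / 2) ^ 2 - (x.1 - t) ^ 2, x.2 - x.1 • A x.2)) U := by
    refine BifZero.homotopy (by fun_prop) (by fun_prop) hU hUb ?_ z3
    intro τ hτ x hx hxU h0
    have e1 := (Prod.ext_iff.1 h0).1
    have e2 := (Prod.ext_iff.1 h0).2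
    simp only [Prod.fst_zero, Prod.snd_zero, Prod.fst_add, Prod.snd_add, Prod.smul_fst, Prod.smul_snd, smul_eq_mul] at e1 e2
    rw [← add_smul, sub_add_cancel, one_smul] at e2
    rcases hUbd x hx hxU with hh | hh
    · have hst : x.1 ≠ t := by
        intro h; rw [h] at hh; simp at hh; linarith
      have hw := h4 _ hst _ e2
      rw [hw, norm_zero, ← sq_abs (x.1 - t), hh] at e1
      rcases hτ.1.eq_or_lt with h | h
      · subst h; linarith
      · nlinarith [mul_nonneg (sub_nonneg.2 hτ.2) hr.le, mul_pos h (pow_pos hε 2)]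
    · by_cases hst : x.1 = t
      · rw [hh, hst, sub_self] at e1
        rcases hτ.1.eq_or_lt with h | h
        · subst h; linarith
        · nlinarith [mul_nonneg (sub_nonneg.2 hτ.2) (sub_pos.2 hrρ).le, mul_pos h (pow_pos hε 2)]
      · have hw := h4 _ hst _ e2
        rw [hw, norm_zero] at hh
        linarith
  -- stage 5
  have hder : ∀ s : ℝ, LinearMap.det
      (fderiv ℝ (fun x : ℝ × W => ((ε / 2) ^ 2 - (x.1 - t) ^ 2, x.2 - x.1 • A x.2)) (s, 0)).toLinearMap
      = -2 * (s - t) * LinearMap.det ((1 : W →L[ℝ] W) - s • A : W →L[ℝ] W).toLinearMap := by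
    intro s
    have d1 : HasFDerivAt (fun x : ℝ × W => (ε / 2) ^ 2 - (x.1 - t) ^ 2)
        ((-2 * (s - t)) • ContinuousLinearMap.fst ℝ ℝ W) (s, 0) := by
      have := ((hasFDerivAt_fst (𝕜 := ℝ) (p := ((s, 0) : ℝ × W))).sub_const t).pow 2
      refine (this.const_sub _).congr_fderiv ?_
      ext <;> simp
    have d2 : HasFDerivAt (fun x : ℝ × W => x.2 - x.1 • A x.2)
        (((1 : W →L[ℝ] W) - s • A) ∘L ContinuousLinearMap.snd ℝ ℝ W) (s, 0) := by
      have e1 := (hasFDerivAt_fst (𝕜 := ℝ) (p := ((s, 0) : ℝ × W)))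
      have e2 := (hasFDerivAt_snd (𝕜 := ℝ) (p := ((s, 0) : ℝ × W)))
      have e3 := A.hasFDerivAt.comp ((s, 0) : ℝ × W) e2
      refine (e2.sub (e1.smul e3)).congr_fderiv ?_
      ext <;> simp
    rw [(d1.prodMk d2).fderiv]
    have : (((-2 * (s - t)) • ContinuousLinearMap.fst ℝ ℝ W).prod
        (((1 : W →L[ℝ] W) - s • A) ∘L ContinuousLinearMap.snd ℝ ℝ W)).toLinearMap
        = LinearMap.prodMap ((-2 * (s - t)) • (LinearMap.id : ℝ →ₗ[ℝ] ℝ))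
          ((1 : W →L[ℝ] W) - s • A : W →L[ℝ] W).toLinearMap := by
      ext <;> simp
    rw [this, LinearMap.det_prodMap]
    simp
  have hbd : ∀ x : ℝ × W, ∀ f : ℝ × W → ℝ × W, bifDet b (fun k => fderiv ℝ f x (b k)) =
      LinearMap.det (fderiv ℝ f x).toLinearMap := by
    intro x f
    have := b.det_comp (fderiv ℝ f x).toLinearMap b
    rw [b.det_self, mul_one] at this
    exact this
  set dp := LinearMap.det ((1 : W →L[ℝ] W) - (t + ε / 2) • A : W →L[ℝ] W).toLinearMap with hdp
  set dm := LinearMap.det ((1 : W →L[ℝ] W) - (t - ε / 2) • A : W →L[ℝ] W).toLinearMap with hdm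
  have hdp0 : dp ≠ 0 := by intro h; rw [h] at h5; simp at h5
  have hzero : ∀ x : ℝ × W, ((ε / 2) ^ 2 - (x.1 - t) ^ 2, x.2 - x.1 • A x.2) = (0 : ℝ × W) →
      x = (t + ε / 2, 0) ∨ x = (t - ε / 2, 0) := by
    intro x h0
    have e1 := (Prod.ext_iff.1 h0).1
    have e2 := (Prod.ext_iff.1 h0).2
    simp only [Prod.fst_zero, Prod.snd_zero] at e1 e2
    have : (x.1 - (t + ε / 2)) * (x.1 - (t - ε / 2)) = 0 := by linarith
    have hst : x.1 ≠ t := by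
      intro h; rw [h] at this; nlinarith
    have hw := h4 _ hst _ e2
    rcases mul_eq_zero.1 this with h | h
    · left; ext1
      · simp only; linarith
      · exact hw
    · right; ext1
      · simp only; linarith
      · exact hw
  refine BifZero.not_of_pos (μ := μ) (b := b) ?_ hU hUb (-dp) ?_ ?_ (t + ε / 2, 0) ?_ ?_ z4
  · exact ContDiff.prodMk (by fun_prop) (by fun_prop)
  · intro x hx h0
    rcases hzero x h0 with h | h
    · rw [hbd, h, hder, ← hdp]
      have := mul_pos hε (sq_pos_of_ne_zero hdp0)
      linarith
    · rw [hbd, h, hder, ← hdm]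
      nlinarith
  · intro x hx hxU h0
    have hxU' : x ∈ U := by
      rcases hzero x h0 with h | h
      · subst h
        refine ⟨?_, by simpa using hr.trans hrρ⟩
        simp only [add_sub_cancel_left]
        rw [abs_of_pos (by positivity)]; linarith
      · subst h
        refine ⟨?_, by simpa using hr.trans hrρ⟩
        simp only [sub_sub_cancel_left, abs_neg]
        rw [abs_of_pos (by positivity)]; linarith
    exact hxU hxU'
  · refine ⟨?_, by simpa using hr.trans hrρ⟩
    simp only [add_sub_cancel_left]
    rw [abs_of_pos (by positivity)]; linarith
  · ext1
    · simp
    · simp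

lemma bif_sep {X : Type*} [MetricSpace X] (Z F : Set X) (x : X) (hx : x ∈ Z)
    (hZ : ∀ B : Set X, IsClosed B → Bornology.IsBounded B → IsCompact (B ∩ Z))
    (hZc : IsClosed Z) (hF : IsClosed F)
    (hCb : Bornology.IsBounded (connectedComponentIn Z x))
    (hCF : connectedComponentIn Z x ∩ F = ∅) :
    ∃ Ω : Set X, IsOpen Ω ∧ Bornology.IsBounded Ω ∧ x ∈ Ω ∧ closure Ω ∩ F = ∅ ∧
      ∀ y ∈ closure Ω, y ∈ Z → y ∈ Ω := by
  set C := connectedComponentIn Z x with hC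
  have hCZ : C ⊆ Z := connectedComponentIn_subset Z x
  have hxC : x ∈ C := mem_connectedComponentIn hx
  have hCcl : IsClosed C := by
    rw [hC, connectedComponentIn_eq_image hx]
    exact hZc.isClosedEmbedding_subtypeVal.isClosedMap _ isClosed_connectedComponent
  have hCc : IsCompact C := by
    have := hZ C hCcl hCb
    rwa [Set.inter_eq_left.2 hCZ] at this
  obtain ⟨δ, hδ, hδF⟩ := hCc.exists_cthickening_subset_open hF.isOpen_compl (by
    intro y hy hyF
    have : y ∈ C ∩ F := ⟨hy, hyF⟩
    rw [hCF] at this; exact this)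
  set D := Metric.cthickening δ C
  set O := Metric.thickening δ C
  have hOD : O ⊆ D := Metric.thickening_subset_cthickening _ _
  have hCO : C ⊆ O := Metric.self_subset_thickening hδ C
  have hO : IsOpen O := Metric.isOpen_thickening
  have hM : IsCompact (D ∩ Z) := hZ D Metric.isClosed_cthickening hCb.cthickening
  set M := D ∩ Z
  have hxM : x ∈ M := ⟨hOD (hCO hxC), hx⟩
  have : CompactSpace M := isCompact_iff_compactSpace.1 hM
  set x' : M := ⟨x, hxM⟩
  have hcc : ∀ y ∈ connectedComponent x', (y : X) ∈ C := by
    have h1 : IsPreconnected ((Subtype.val : M → X) '' connectedComponent x') :=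
      isPreconnected_connectedComponent.image _ continuous_subtype_val.continuousOn
    have h2 := h1.subset_connectedComponentIn (F := Z) ⟨x', mem_connectedComponent, rfl⟩ (by
      rintro _ ⟨y, _, rfl⟩; exact y.2.2)
    exact fun y hy => h2 ⟨y, hy, rfl⟩
  have hA : ∃ A : Set M, IsClopen A ∧ x' ∈ A ∧ ∀ y ∈ A, (y : X) ∈ O := by
    rw [connectedComponent_eq_iInter_isClopen] at hcc
    have : Nonempty { s : Set M // IsClopen s ∧ x' ∈ s } := ⟨⟨Set.univ, isClopen_univ, trivial⟩⟩
    have := exists_subset_nhds_of_compactSpace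
      (V := fun s : { s : Set M // IsClopen s ∧ x' ∈ s } => (s : Set M))
      (U := Subtype.val ⁻¹' O) ?_ ?_ ?_
    · obtain ⟨s, hs⟩ := this
      exact ⟨s, s.2.1, s.2.2, fun y hy => hs hy⟩
    · intro a b
      exact ⟨⟨a.1 ∩ b.1, a.2.1.inter b.2.1, a.2.2, b.2.2⟩, Set.inter_subset_left,
        Set.inter_subset_right⟩
    · exact fun s => s.2.1.1
    · intro y hy
      exact (hO.preimage continuous_subtype_val).mem_nhds (hCO (hcc y hy))
  obtain ⟨A, hAc, hxA, hAO⟩ := hA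
  have hA1 : IsCompact ((Subtype.val : M → X) '' A) := hAc.1.isCompact.image continuous_subtype_val
  have hA2 : IsCompact ((Subtype.val : M → X) '' Aᶜ) :=
    hAc.compl.1.isCompact.image continuous_subtype_val
  obtain ⟨η, hη, hη2⟩ := hA1.exists_cthickening_subset_open
    (hO.inter hA2.isClosed.isOpen_compl) (by
      rintro _ ⟨y, hy, rfl⟩
      refine ⟨hAO y hy, ?_⟩
      rintro ⟨z, hz, hzy⟩
      exact hz (Subtype.ext hzy ▸ hy))
  have hcl : closure (Metric.thickening η ((Subtype.val : M → X) '' A)) ⊆ _ :=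
    (Metric.closure_thickening_subset_cthickening _ _).trans hη2
  refine ⟨Metric.thickening η ((Subtype.val : M → X) '' A), Metric.isOpen_thickening,
    hA1.isBounded.thickening, Metric.self_subset_thickening hη _ ⟨x', hxA, rfl⟩, ?_, ?_⟩
  · rw [Set.eq_empty_iff_forall_notMem]
    rintro y ⟨hy, hyF⟩
    exact hδF (hOD (hcl hy).1) hyF
  · intro y hy hyZ
    obtain ⟨h1, h2⟩ := hcl hy
    have hyM : y ∈ M := ⟨hOD h1, hyZ⟩
    apply Metric.self_subset_thickening hη
    by_contra hcon
    apply h2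
    refine ⟨⟨y, hyM⟩, ?_, rfl⟩
    intro h
    exact hcon ⟨⟨y, hyM⟩, h, rfl⟩

lemma bif_proper {Y E : Type*} [MetricSpace Y] [ProperSpace Y] [NormedAddCommGroup E]
    (B : Set (Y × E)) (hB : IsClosed B) (hBb : Bornology.IsBounded B) (K : Y × E → E)
    (hK : Continuous K) (k : Set E) (hk : IsCompact k) (hKk : ∀ x ∈ B, K x ∈ k)
    (hne : ∀ x ∈ B, x.2 - K x ≠ 0) : ∃ δ > 0, ∀ x ∈ B, δ ≤ ‖x.2 - K x‖ := by
  by_contra! hcon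
  have h1 : ∀ n : ℕ, ∃ x ∈ B, ‖x.2 - K x‖ < 1 / ((n : ℝ) + 1) :=
    fun n => hcon _ (by positivity)
  choose x hxB hx using h1
  have hY : IsCompact (closure (Prod.fst '' B)) := hBb.image_fst.isCompact_closure
  obtain ⟨⟨y, e⟩, -, φ, hφ, hlim⟩ := (hY.prod hk).tendsto_subseq (x := fun n => ((x n).1, K (x n)))
    (fun n => ⟨subset_closure ⟨_, hxB n, rfl⟩, hKk _ (hxB n)⟩)
  have hlim1 : Tendsto (fun n => (x (φ n)).1) atTop (𝓝 y) :=
    (continuous_fst.tendsto _).comp hlim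
  have hlim2 : Tendsto (fun n => K (x (φ n))) atTop (𝓝 e) :=
    (continuous_snd.tendsto _).comp hlim
  have hz : Tendsto (fun n => (x n).2 - K (x n)) atTop (𝓝 0) :=
    squeeze_zero_norm (fun n => (hx n).le) tendsto_one_div_add_atTop_nhds_zero_nat
  have hz' := hz.comp hφ.tendsto_atTop
  have hlim3 : Tendsto (fun n => (x (φ n)).2) atTop (𝓝 e) := by
    have := hz'.add hlim2
    simpa [Function.comp_def] using this
  have hlim4 : Tendsto (fun n => x (φ n)) atTop (𝓝 (y, e)) := hlim1.prodMk_nhds hlim3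
  have hmem : (y, e) ∈ B := hB.mem_of_tendsto hlim4 (Eventually.of_forall fun n => hxB _)
  have : K (y, e) = e := tendsto_nhds_unique ((hK.tendsto _).comp hlim4) hlim2
  exact hne _ hmem (by simp [this])

lemma bif_schauder {E : Type*} [NormedAddCommGroup E] [NormedSpace ℝ E] (k : Set E)
    (hk : IsCompact k) (δ : ℝ) (hδ : 0 < δ) :
    ∃ (W : Submodule ℝ E), FiniteDimensional ℝ W ∧ ∃ p : E → W, Continuous p ∧
      ∀ y ∈ k, ‖((p y : W) : E) - y‖ < δ := by
  obtain ⟨s, hsk, hsf, hs⟩ := hk.finite_cover_balls hδ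
  refine ⟨Submodule.span ℝ s, FiniteDimensional.span_of_finite ℝ hsf, ?_⟩
  have := exists_continuous_forall_mem_convex_of_local_const (X := E)
    (E := Submodule.span ℝ s) (t := fun y => {w | y ∈ k → ‖((w : Submodule.span ℝ s) : E) - y‖ < δ})
    ?_ ?_
  · obtain ⟨g, hg⟩ := this
    exact ⟨g, g.continuous, fun y hy => hg y hy⟩
  · intro y
    by_cases hy : y ∈ k
    · have h1 := (convex_ball y δ).linear_preimage (Submodule.span ℝ s).subtype
      convert! h1 using 1
      ext w
      simp [hy, dist_eq_norm]
    · convert! convex_univ (𝕜 := ℝ) (E := Submodule.span ℝ s) using 1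
      ext w
      simp [hy]
  · intro y
    by_cases hy : y ∈ k
    · have := hs hy
      simp only [Set.mem_iUnion] at this
      obtain ⟨c, hc, hyc⟩ := this
      refine ⟨⟨c, Submodule.subset_span hc⟩, ?_⟩
      filter_upwards [Metric.isOpen_ball.mem_nhds hyc] with z hz _
      rw [← dist_eq_norm, dist_comm]
      exact hz
    · refine ⟨0, ?_⟩
      filter_upwards [hk.isClosed.isOpen_compl.mem_nhds hy] with z hz hz2
      exact absurd hz2 hz

lemma bif_core {E : Type*} [NormedAddCommGroup E] [NormedSpace ℝ E]
    (T D : E →L[ℝ] E) (N : Submodule ℝ E) [FiniteDimensional ℝ N] (hTN : ∀ u, T u ∈ N)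
    (hD : ∀ M : ℝ, ∃ k, IsCompact k ∧ ∀ u, ‖u‖ ≤ M → D u ∈ k)
    (H : E → E) (hH : Continuous H)
    (hHc : ∀ M : ℝ, ∃ k, IsCompact k ∧ ∀ u, ‖u‖ ≤ M → H u ∈ k)
    (hHs : ∀ c : ℝ, 0 < c → ∃ r > 0, ∀ u, ‖u‖ ≤ r → ‖H u‖ ≤ c * ‖u‖)
    (t ε₀ : ℝ) (hε₀ : 0 < ε₀)
    (hT : ∀ s : ℝ, s ≠ t → ∀ u, u - s • T u = 0 → u = 0)
    (hlin : ∀ s : ℝ, s ≠ t → |s - t| ≤ ε₀ → ∀ σ ∈ Set.Icc (0:ℝ) 1, ∀ u,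
      u - (s • T u + (σ * (s - t)) • D u) = 0 → u = 0)
    (hdet : ∀ (W : Submodule ℝ E) [FiniteDimensional ℝ W], N ≤ W → ∀ A : W →L[ℝ] W,
      (∀ w, (A w : E) = T w) → ∀ ε : ℝ, 0 < ε →
      LinearMap.det ((1 : W →L[ℝ] W) - (t + ε / 2) • A : W →L[ℝ] W).toLinearMap *
      LinearMap.det ((1 : W →L[ℝ] W) - (t - ε / 2) • A : W →L[ℝ] W).toLinearMap < 0)
    (Ω : Set (ℝ × E)) (hΩ : IsOpen Ω) (hΩb : Bornology.IsBounded Ω) (htΩ : (t, (0 : E)) ∈ Ω)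
    (hsol : ∀ x ∈ closure Ω, x.2 ≠ 0 →
      x.2 - (x.1 • T x.2 + ((x.1 - t) • D x.2 + H x.2)) = 0 → x ∈ Ω)
    (hm : ∀ ε : ℝ, 0 < ε → ∃ m > 0, ∀ x ∈ closure Ω, x.2 ≠ 0 →
      x.2 - (x.1 • T x.2 + ((x.1 - t) • D x.2 + H x.2)) = 0 → ε ≤ |x.1 - t| → m ≤ ‖x.2‖) :
    False := by
  have hTc : ∀ M : ℝ, ∃ k, IsCompact k ∧ ∀ u, ‖u‖ ≤ M → T u ∈ k := by
    intro M
    have hb : Bornology.IsBounded (T '' Metric.closedBall 0 M) :=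
      T.lipschitz.isBounded_image Metric.isBounded_closedBall
    obtain ⟨M', hM'⟩ := hb.exists_norm_le
    refine ⟨(N.subtypeL) '' Metric.closedBall 0 M', (isCompact_closedBall _ _).image
      N.subtypeL.continuous, ?_⟩
    intro u hu
    refine ⟨⟨T u, hTN u⟩, ?_, rfl⟩
    rw [mem_closedBall_zero_iff]
    exact hM' _ ⟨u, by simpa using hu, rfl⟩
  -- choice of ε ρ
  obtain ⟨η, hη, hηΩ⟩ := Metric.isOpen_iff.1 hΩ _ htΩ
  set ε := min ε₀ η with hεdef
  have hε : 0 < ε := lt_min hε₀ hη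
  have hUΩ : ∀ x : ℝ × E, |x.1 - t| < ε → ‖x.2‖ < η → x ∈ Ω := by
    intro x h1 h2
    apply hηΩ
    rw [Metric.mem_ball, Prod.dist_eq, max_lt_iff]
    exact ⟨by rw [Real.dist_eq]; exact h1.trans_le (min_le_right _ _), by simpa using h2⟩
  -- linear estimate
  obtain ⟨c, hc, hcl'⟩ : ∃ c > 0, ∀ σ ∈ Set.Icc (0:ℝ) 1, ∀ s : ℝ, |s - t| = ε → ∀ u : E,
      c * ‖u‖ ≤ ‖u - (s • T u + (σ * (s - t)) • D u)‖ := by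
    obtain ⟨kT, hkT, hkT'⟩ := hTc 1
    obtain ⟨kD, hkD, hkD'⟩ := hD 1
    let f : (ℝ × ℝ) × (E × E) → E := fun q => q.1.2 • q.2.1 + (q.1.1 * (q.1.2 - t)) • q.2.2
    have hf : Continuous f := by fun_prop
    obtain ⟨c, hc, hc'⟩ := bif_proper (Y := ℝ × ℝ) (E := E)
      {p | p.1.1 ∈ Set.Icc (0:ℝ) 1 ∧ |p.1.2 - t| = ε ∧ ‖p.2‖ = 1}
      ((isClosed_Icc.preimage (by fun_prop : Continuous fun p : (ℝ × ℝ) × E => p.1.1)).inter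
        ((isClosed_eq (f := fun p : (ℝ × ℝ) × E => |p.1.2 - t|) (g := fun _ => ε)
          (by fun_prop) (by fun_prop)).inter
        (isClosed_eq (f := fun p : (ℝ × ℝ) × E => ‖p.2‖) (g := fun _ => 1)
          (by fun_prop) (by fun_prop))))
      (by
        refine ((Metric.isBounded_Icc (0:ℝ) 1).prod
          (Metric.isBounded_closedBall (x := t) (r := ε))).prod
          (Metric.isBounded_closedBall (x := (0 : E)) (r := 1)) |>.subset ?_
        rintro p ⟨h1, h2, h3⟩
        refine ⟨⟨h1, ?_⟩, ?_⟩
        · rw [Metric.mem_closedBall, Real.dist_eq]; exact h2.le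
        · simpa using h3.le)
      (fun p => p.1.2 • T p.2 + (p.1.1 * (p.1.2 - t)) • D p.2) (by fun_prop)
      (f '' ((Set.Icc (0:ℝ) 1 ×ˢ Metric.closedBall t ε) ×ˢ (kT ×ˢ kD)))
      (((isCompact_Icc.prod (isCompact_closedBall _ _)).prod (hkT.prod hkD)).image hf)
      (by
        rintro p ⟨h1, h2, h3⟩
        refine ⟨(p.1, (T p.2, D p.2)), ⟨⟨h1, ?_⟩, hkT' _ h3.le, hkD' _ h3.le⟩, rfl⟩
        rw [Metric.mem_closedBall, Real.dist_eq]; exact h2.le)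
      (by
        rintro p ⟨h1, h2, h3⟩ h0
        have : p.2 = 0 := hlin p.1.2 (by
          intro h; rw [h] at h2; simp at h2; linarith) (h2.le.trans (min_le_left _ _)) _ h1 _ h0
        rw [this] at h3; simp at h3)
    refine ⟨c, hc, fun σ hσ s hs u => ?_⟩
    by_cases hu : u = 0
    · simp [hu]
    have hu' : 0 < ‖u‖ := norm_pos_iff.2 hu
    have := hc' ((σ, s), ‖u‖⁻¹ • u) ⟨hσ, hs, by
      rw [norm_smul, norm_inv, norm_norm, inv_mul_cancel₀ hu'.ne']⟩
    simp only [map_smul] at this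
    have e : ‖u‖⁻¹ • u - (s • ‖u‖⁻¹ • T u + (σ * (s - t)) • ‖u‖⁻¹ • D u)
        = ‖u‖⁻¹ • (u - (s • T u + (σ * (s - t)) • D u)) := by module
    rw [e, norm_smul, norm_inv, norm_norm] at this
    rw [inv_mul_eq_div, le_div_iff₀ hu'] at this
    exact this
  obtain ⟨r₁, hr₁, hr₁'⟩ := hHs (c / 2) (by positivity)
  obtain ⟨m, hm0, hm'⟩ := hm ε hε
  set r := min (min m η) r₁ / 2 with hrdef
  have hmin : 0 < min (min m η) r₁ := lt_min (lt_min hm0 hη) hr₁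
  have hr : 0 < r := by positivity
  have hrm : r < m := by
    have : min (min m η) r₁ ≤ m := (min_le_left _ _).trans (min_le_left _ _)
    linarith
  have hrη : r < η := by
    have : min (min m η) r₁ ≤ η := (min_le_left _ _).trans (min_le_right _ _)
    linarith
  have hrr : r ≤ r₁ := by
    have : min (min m η) r₁ ≤ r₁ := min_le_right _ _
    linarith
  -- bound
  obtain ⟨M₀, hM₀⟩ := hΩb.closure.exists_norm_le
  set M := max M₀ (|t| + ε + r) with hMdef
  let Rem : ℝ × E → E := fun x => (x.1 - t) • D x.2 + H x.2
  have hRem : Continuous Rem := by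
    show Continuous fun x : ℝ × E => (x.1 - t) • D x.2 + H x.2
    fun_prop
  obtain ⟨kT, hkT, hkT'⟩ := hTc M
  obtain ⟨kD, hkD, hkD'⟩ := hD M
  obtain ⟨kH, hkH, hkH'⟩ := hHc M
  let k : Set E := (fun q : ℝ × (E × E) => (q.1 - t) • q.2.1 + q.2.2) ''
    (Metric.closedBall 0 M ×ˢ (kD ×ˢ kH))
  have hk : IsCompact k :=
    ((isCompact_closedBall _ _).prod (hkD.prod hkH)).image (by fun_prop)
  have hkR : ∀ x : ℝ × E, ‖x‖ ≤ M → Rem x ∈ k := by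
    intro x hx
    refine ⟨(x.1, (D x.2, H x.2)), ⟨?_, hkD' _ ((norm_snd_le x).trans hx),
      hkH' _ ((norm_snd_le x).trans hx)⟩, rfl⟩
    rw [mem_closedBall_zero_iff]; exact (norm_fst_le x).trans hx
  have hΩM : ∀ x ∈ closure Ω, ‖x‖ ≤ M := fun x hx => (hM₀ x hx).trans (le_max_left _ _)
  let k2 : Set E := (fun q : ℝ × (E × E) => q.1 • q.2.1 + q.2.2) ''
    (Metric.closedBall 0 M ×ˢ (kT ×ˢ k))
  have hk2 : IsCompact k2 :=
    ((isCompact_closedBall _ _).prod (hkT.prod hk)).image (by fun_prop)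
  let B : Set (ℝ × E) := (closure Ω ∩ (Ωᶜ ∩ {x | r ≤ ‖x.2‖})) ∪
    (closure Ω ∩ ({x | |x.1 - t| < ε ∧ ‖x.2‖ < η}ᶜ ∩ {x | ‖x.2‖ = r}))
  have hBcl : B ⊆ closure Ω := by
    rintro x (h | h)
    · exact h.1
    · exact h.1
  have hBc : IsClosed B := by
    have hU : IsOpen {x : ℝ × E | |x.1 - t| < ε ∧ ‖x.2‖ < η} :=
      (isOpen_lt (f := fun x : ℝ × E => |x.1 - t|) (g := fun _ => ε) (by fun_prop)
        (by fun_prop)).inter (isOpen_lt (f := fun x : ℝ × E => ‖x.2‖) (g := fun _ => η)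
          (by fun_prop) (by fun_prop))
    exact (isClosed_closure.inter (hΩ.isClosed_compl.inter
      (isClosed_le (by fun_prop) (by fun_prop)))).union
      (isClosed_closure.inter (hU.isClosed_compl.inter
      (isClosed_eq (by fun_prop) (by fun_prop))))
  obtain ⟨δ₁, hδ₁, hδ₁'⟩ := bif_proper B hBc (hΩb.closure.subset hBcl)
    (fun x => x.1 • T x.2 + Rem x) (by fun_prop) k2 hk2
    (by
      intro x hx
      have hxM := hΩM x (hBcl hx)
      refine ⟨(x.1, (T x.2, Rem x)), ⟨?_, hkT' _ ((norm_snd_le x).trans hxM), hkR _ hxM⟩, rfl⟩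
      rw [mem_closedBall_zero_iff]; exact (norm_fst_le x).trans hxM)
    (by
      rintro x (⟨h1, h2, h3⟩ | ⟨h1, h2, h3⟩) h0
      · have hx0 : x.2 ≠ 0 := by
          intro h; simp only [Set.mem_ofPred_eq, h, norm_zero] at h3; linarith
        exact h2 (hsol x h1 hx0 h0)
      · have h3' : ‖x.2‖ = r := h3
        have hx0 : x.2 ≠ 0 := by
          intro h; rw [h, norm_zero] at h3'; linarith
        have : ε ≤ |x.1 - t| := by
          by_contra hcon
          push Not at hcon
          exact h2 ⟨hcon, by rw [h3']; exact hrη⟩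
        have := hm' x h1 hx0 h0 this
        linarith)
  set δ := min δ₁ (c * r / 4) with hδdef
  have hδ : 0 < δ := lt_min hδ₁ (by positivity)
  obtain ⟨W₀, hW₀, p, hp, hpk⟩ := bif_schauder k hk δ hδ
  let W : Submodule ℝ E := N ⊔ W₀
  have : FiniteDimensional ℝ W := inferInstanceAs (FiniteDimensional ℝ ↥(N ⊔ W₀))
  have hNW : N ≤ W := le_sup_left
  have hWW : W₀ ≤ W := le_sup_right
  let A : W →L[ℝ] W := (T ∘L W.subtypeL).codRestrict W (fun w => hNW (hTN _))
  have hA : ∀ w, (A w : E) = T w := fun w => rfl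
  let j : ℝ × W → ℝ × E := fun x => (x.1, (x.2 : E))
  have hj : Continuous j := by
    show Continuous fun x : ℝ × W => (x.1, (x.2 : E))
    fun_prop
  let R : ℝ × W → W := fun x => ⟨(p (Rem (j x)) : E), hWW (p (Rem (j x))).2⟩
  have hR : Continuous R :=
    (continuous_subtype_val.comp (hp.comp (hRem.comp hj))).subtype_mk _
  have hRR : ∀ x : ℝ × W, ‖j x‖ ≤ M → ‖(R x : E) - Rem (j x)‖ < δ :=
    fun x hx => hpk _ (hkR _ hx)
  have hjn : ∀ x : ℝ × W, ‖j x‖ = ‖x‖ := fun x => rfl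
  have hcl : ∀ x ∈ closure (j ⁻¹' Ω), j x ∈ closure Ω := fun x hx =>
    hj.closure_preimage_subset Ω hx
  have hBne : ∀ x : ℝ × W, j x ∈ B → x.2 - x.1 • A x.2 - R x ≠ 0 := by
    intro x hx h0
    have h1 := hδ₁' _ hx
    have h2 := hRR x (hΩM _ (hBcl hx))
    have h3 : ((x.2 - x.1 • A x.2 - R x : W) : E) = 0 := by rw [h0]; rfl
    have h4 : (j x).2 - ((j x).1 • T (j x).2 + Rem (j x)) = (R x : E) - Rem (j x) := by
      simp only [Submodule.coe_sub, Submodule.coe_smul, hA] at h3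
      show (x.2 : E) - (x.1 • T x.2 + Rem (j x)) = (R x : E) - Rem (j x)
      rw [← sub_eq_zero, ← h3]; abel
    rw [h4] at h1
    have : δ ≤ δ₁ := min_le_left _ _
    linarith
  refine bif_fd A R hR (j ⁻¹' Ω) (hΩ.preimage hj) ?_ t ε η r hε hr hrη ?_ ?_ ?_ ?_ ?_ ?_
  · refine isBounded_iff_forall_norm_le.2 ⟨M, fun x hx => ?_⟩
    rw [← hjn]; exact hΩM _ (subset_closure hx)
  · intro x h1 h2
    exact hUΩ (j x) h1 h2
  · intro x hx hxΩ hxr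
    exact hBne x (Or.inl ⟨hcl x hx, hxΩ, hxr⟩)
  · intro x hx hxΩ hxr
    exact hBne x (Or.inr ⟨hcl x hx, hxΩ, hxr⟩)
  · intro σ hσ x hxε hxr h0
    have h1 := hcl' σ hσ x.1 hxε (x.2 : E)
    have hxr' : ‖(x.2 : E)‖ = r := hxr
    have h2 := hRR x (by
      rw [hjn, Prod.norm_def]
      refine max_le ?_ ?_
      · have := abs_sub_abs_le_abs_sub x.1 t
        rw [Real.norm_eq_abs]
        refine le_trans ?_ (le_max_right _ _)
        linarith
      · rw [hxr]
        refine le_trans ?_ (le_max_right _ _)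
        have := abs_nonneg t
        linarith)
    have h3 : ((x.2 - x.1 • A x.2 - σ • R x : W) : E) = 0 := by rw [h0]; rfl
    have h4 : (x.2 : E) - (x.1 • T x.2 + (σ * (x.1 - t)) • D x.2) =
        σ • (((R x : E) - Rem (j x)) + H x.2) := by
      simp only [Submodule.coe_sub, Submodule.coe_smul, hA] at h3
      rw [← sub_eq_zero, ← h3]
      show _ - σ • (((R x : E) - ((x.1 - t) • D x.2 + H x.2)) + H x.2) = _
      module
    have h5 : ‖σ • (((R x : E) - Rem (j x)) + H x.2)‖ ≤ δ + c / 2 * r := by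
      rw [norm_smul, Real.norm_eq_abs, abs_of_nonneg hσ.1]
      have h6 := norm_add_le ((R x : E) - Rem (j x)) (H x.2)
      have h7 := hr₁' (x.2 : E) (by rw [hxr']; exact hrr)
      rw [hxr'] at h7
      calc σ * _ ≤ 1 * ‖((R x : E) - Rem (j x)) + H x.2‖ :=
            mul_le_mul_of_nonneg_right hσ.2 (norm_nonneg _)
        _ ≤ _ := by linarith
    rw [h4, hxr'] at h1
    have : δ ≤ c * r / 4 := min_le_right _ _
    have := mul_pos hc hr
    linarith
  · intro s hs w hw
    have h3 : ((w - s • A w : W) : E) = 0 := by rw [hw]; rfl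
    exact Subtype.ext (hT s hs w h3)
  · exact hdet W hNW A hA ε hε

lemma bif_sylv {N W : Type*} [AddCommGroup N] [Module ℝ N] [AddCommGroup W] [Module ℝ W]
    [FiniteDimensional ℝ N] [FiniteDimensional ℝ W] (B : N →ₗ[ℝ] W) (C : W →ₗ[ℝ] N) :
    LinearMap.det (1 - B ∘ₗ C) = LinearMap.det (1 - C ∘ₗ B) := by
  let bN := Module.finBasis ℝ N
  let bW := Module.finBasis ℝ W
  rw [← LinearMap.det_toMatrix bN, ← LinearMap.det_toMatrix bW, map_sub, map_sub,
    LinearMap.toMatrix_one, LinearMap.toMatrix_one, LinearMap.toMatrix_comp bW bN bW,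
    LinearMap.toMatrix_comp bN bW bN, Matrix.det_one_sub_mul_comm]

lemma bif_nil {N : Type*} [AddCommGroup N] [Module ℝ N] [FiniteDimensional ℝ N]
    (f : Module.End ℝ N) (μ : ℝ) (hn : ∀ x, ∃ k : ℕ, ((f - μ • (1 : Module.End ℝ N)) ^ k) x = 0)
    (s : ℝ) : LinearMap.det (1 - s • f) = (1 - s * μ) ^ Module.finrank ℝ N := by
  have hnil : IsNilpotent (f - μ • (1 : Module.End ℝ N)) := Module.End.isNilpotent_iff_of_finite.2 hn
  by_cases hs : s = 0
  · simp [hs]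
  have h1 := LinearMap.eval_charpoly (f - μ • (1 : Module.End ℝ N)) ((1 - s * μ) / s)
  rw [hnil.charpoly_eq_X_pow_finrank] at h1
  have h2 : (1 - s • f : Module.End ℝ N) =
      s • (algebraMap ℝ (Module.End ℝ N) ((1 - s * μ) / s) - (f - μ • (1 : Module.End ℝ N))) := by
    ext x
    simp only [LinearMap.sub_apply, LinearMap.smul_apply, Module.End.one_apply,
      Module.algebraMap_end_apply, smul_sub, smul_smul]
    rw [mul_div_cancel₀ _ hs]
    module
  rw [h2, LinearMap.det_smul, ← h1]
  simp [← mul_pow, mul_div_cancel₀ _ hs]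

lemma bif_hdet {E : Type*} [NormedAddCommGroup E] [NormedSpace ℝ E] (S P : E →L[ℝ] E)
    (t : ℝ) (ht : t ≠ 0) (N : Submodule ℝ E)
    (hN : N = Module.End.maxGenEigenspace (S : E →ₗ[ℝ] E) (1 / t))
    (hodd : Odd (Module.finrank ℝ N)) [FiniteDimensional ℝ N]
    (hPN : ∀ u, P u ∈ N) (hP : ∀ u ∈ N, P u = u) (hSN : ∀ u ∈ N, S u ∈ N)
    (W : Submodule ℝ E) [FiniteDimensional ℝ W] (hNW : N ≤ W) (A : W →L[ℝ] W)
    (hA : ∀ w, (A w : E) = S (P w)) (ε : ℝ) (hε : 0 < ε) :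
      LinearMap.det ((1 : W →L[ℝ] W) - (t + ε / 2) • A : W →L[ℝ] W).toLinearMap *
      LinearMap.det ((1 : W →L[ℝ] W) - (t - ε / 2) • A : W →L[ℝ] W).toLinearMap < 0 := by
  let C : W →ₗ[ℝ] N := (P.toLinearMap ∘ₗ W.subtype).codRestrict N (fun w => hPN _)
  let f : Module.End ℝ N := S.toLinearMap.restrict hSN
  let B : N →ₗ[ℝ] W := Submodule.inclusion hNW ∘ₗ f
  have key : ∀ s : ℝ, LinearMap.det ((1 : W →L[ℝ] W) - s • A : W →L[ℝ] W).toLinearMap =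
      (1 - s * (1 / t)) ^ Module.finrank ℝ N := by
    intro s
    have h1 : ((1 : W →L[ℝ] W) - s • A : W →L[ℝ] W).toLinearMap = 1 - (s • B) ∘ₗ C := by
      ext w
      simp [hA, B, C, f]
    have h2 : C ∘ₗ (s • B) = s • f := by
      ext w
      simp [B, C, f, hP _ (hSN _ w.2)]
    rw [h1, bif_sylv, h2, bif_nil]
    rintro ⟨x, hx⟩
    rw [hN, Module.End.mem_maxGenEigenspace] at hx
    obtain ⟨k, hk⟩ := hx
    refine ⟨k, ?_⟩
    have h3 : ∀ (n : ℕ) (y : N), (((f - (1 / t) • (1 : Module.End ℝ N)) ^ n) y : E) =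
        (((S : E →ₗ[ℝ] E) - (1 / t) • (1 : Module.End ℝ E)) ^ n) y := by
      intro n
      induction n with
      | zero => intro y; simp
      | succ n ih =>
        intro y
        rw [pow_succ, pow_succ, Module.End.mul_apply, Module.End.mul_apply, ih]
        rfl
    apply Subtype.ext
    rw [h3]
    exact hk
  rw [key, key, ← mul_pow]
  apply hodd.pow_neg
  have : (1 - (t + ε / 2) * (1 / t)) * (1 - (t - ε / 2) * (1 / t)) = - (ε / 2 / t) ^ 2 := by
    field_simp
    ring
  rw [this]
  have : 0 < (ε / 2 / t) ^ 2 := by positivity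
  linarith

lemma bif_small {E : Type*} [NormedAddCommGroup E] [NormedSpace ℝ E] [Nontrivial E]
    (G : E → E) (hGcont : Continuous G)
    (hGsmall : Tendsto (fun u : E => ‖G u‖ / ‖u‖) (𝓝[≠] (0 : E)) (𝓝 0)) :
    G 0 = 0 ∧ ∀ c : ℝ, 0 < c → ∃ r > 0, ∀ u, ‖u‖ ≤ r → ‖G u‖ ≤ c * ‖u‖ := by
  have hG0 : G 0 = 0 := by
    have h1 : Tendsto (fun u : E => ‖G u‖ / ‖u‖ * ‖u‖) (𝓝[≠] (0 : E)) (𝓝 (0 * ‖(0:E)‖)) :=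
      hGsmall.mul ((continuous_norm.tendsto 0).mono_left nhdsWithin_le_nhds)
    have h2 : Tendsto (fun u : E => ‖G u‖ / ‖u‖ * ‖u‖) (𝓝[≠] (0 : E)) (𝓝 ‖G 0‖) := by
      refine (((hGcont.norm).tendsto 0).mono_left nhdsWithin_le_nhds).congr' ?_
      filter_upwards [self_mem_nhdsWithin] with u hu
      have : ‖u‖ ≠ 0 := norm_ne_zero_iff.2 hu
      field_simp
    have := tendsto_nhds_unique h1 h2
    rw [zero_mul] at this
    exact norm_eq_zero.1 this.symm
  refine ⟨hG0, fun c hc => ?_⟩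
  have h1 := hGsmall.eventually (gt_mem_nhds hc)
  rw [eventually_nhdsWithin_iff, Metric.eventually_nhds_iff] at h1
  obtain ⟨r, hr, h⟩ := h1
  refine ⟨r / 2, by positivity, fun u hu => ?_⟩
  by_cases h0 : u = 0
  · simp [h0, hG0]
  have := h (y := u) (by rw [dist_zero_right]; linarith) h0
  rw [div_lt_iff₀ (norm_pos_iff.2 h0)] at this
  exact this.le

lemma bif_nec {E : Type*} [NormedAddCommGroup E] [NormedSpace ℝ E]
    (S : E →L[ℝ] E)
    (hS : ∀ M : ℝ, ∃ k, IsCompact k ∧ ∀ u, ‖u‖ ≤ M → S u ∈ k)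
    (G : E → E)
    (hGs : ∀ c : ℝ, 0 < c → ∃ r > 0, ∀ u, ‖u‖ ≤ r → ‖G u‖ ≤ c * ‖u‖) (s : ℝ)
    (hs : (s, (0 : E)) ∈ closure {p : ℝ × E | p.2 = p.1 • S p.2 + G p.2 ∧ p.2 ≠ 0}) :
    ∃ u : E, u ≠ 0 ∧ u = s • S u := by
  by_contra! hcon
  obtain ⟨k, hk, hk'⟩ := hS 1
  obtain ⟨c, hc, hcl⟩ := bif_proper (Y := ℝ) (E := E) {x | x.1 = s ∧ ‖x.2‖ = 1}
    ((isClosed_eq (f := fun x : ℝ × E => x.1) (g := fun _ => s) (by fun_prop) (by fun_prop)).inter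
      (isClosed_eq (f := fun x : ℝ × E => ‖x.2‖) (g := fun _ => 1) (by fun_prop) (by fun_prop)))
    (by
      refine ((Metric.isBounded_closedBall (x := s) (r := 0)).prod
        (Metric.isBounded_closedBall (x := (0 : E)) (r := 1))).subset ?_
      rintro x ⟨h1, h2⟩
      exact ⟨by simp [h1], by simpa using h2.le⟩)
    (fun x => s • S x.2) (by fun_prop) ((fun v => s • v) '' k) (hk.image (by fun_prop))
    (by rintro x ⟨h1, h2⟩; exact ⟨_, hk' _ h2.le, rfl⟩)
    (by
      rintro x ⟨h1, h2⟩ h0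
      refine hcon x.2 ?_ (sub_eq_zero.1 h0)
      intro h; rw [h] at h2; simp at h2)
  have hcl' : ∀ u : E, c * ‖u‖ ≤ ‖u - s • S u‖ := by
    intro u
    by_cases hu : u = 0
    · simp [hu]
    have hu' : 0 < ‖u‖ := norm_pos_iff.2 hu
    have := hcl (s, ‖u‖⁻¹ • u) ⟨rfl, by
      rw [norm_smul, norm_inv, norm_norm, inv_mul_cancel₀ hu'.ne']⟩
    simp only [map_smul] at this
    have e : ‖u‖⁻¹ • u - (s • ‖u‖⁻¹ • S u) = ‖u‖⁻¹ • (u - s • S u) := by module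
    rw [e, norm_smul, norm_inv, norm_norm] at this
    rw [inv_mul_eq_div, le_div_iff₀ hu'] at this
    exact this
  obtain ⟨r, hr, hr'⟩ := hGs (c / 4) (by positivity)
  have hS0 : 0 < ‖S‖ + 1 := by positivity
  obtain ⟨⟨s', u⟩, ⟨h1, h2⟩, h3⟩ := Metric.mem_closure_iff.1 hs (min r (c / 4 / (‖S‖ + 1)))
    (lt_min hr (by positivity))
  rw [Prod.dist_eq, max_lt_iff] at h3
  obtain ⟨h3, h4⟩ := h3
  simp only [dist_zero_left] at h1 h2 h3 h4
  have h5 := hr' u (h4.le.trans (min_le_left _ _))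
  have h6 : |s - s'| * (‖S‖ + 1) < c / 4 := by
    rw [← lt_div_iff₀ hS0, ← Real.dist_eq]
    exact h3.trans_le (min_le_right _ _)
  have h7 := hcl' u
  have h8 : u - s • S u = (s' - s) • S u + G u := by
    nth_rewrite 1 [h1]
    module
  rw [h8] at h7
  have h9 := norm_add_le ((s' - s) • S u) (G u)
  rw [norm_smul, Real.norm_eq_abs, abs_sub_comm] at h9
  have h10 : |s - s'| * ‖S u‖ ≤ |s - s'| * (‖S‖ * ‖u‖) :=
    mul_le_mul_of_nonneg_left (S.le_opNorm u) (abs_nonneg _)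
  have hu : 0 < ‖u‖ := norm_pos_iff.2 h2
  have h11 : |s - s'| * (‖S‖ * ‖u‖) ≤ c / 4 * ‖u‖ := by
    have := mul_le_mul_of_nonneg_right h6.le hu.le
    have := mul_nonneg (abs_nonneg (s - s')) hu.le
    linarith
  have := mul_pos hc hu
  linarith

/-- Rabinowitz global bifurcation theorem. If S is a compact linear
operator on a Banach space E, 1/t is an eigenvalue of S of odd algebraic
multiplicity, G is a compact continuous map with ‖G(u)‖/‖u‖ → 0 as ‖u‖ → 0, and
Σ is the closure of the nontrivial solution set of u = s·S(u) + G(u), then the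
connected component C of Σ ∪ {(t,0)} containing (t,0) is unbounded, or contains
some (t̂,0) with t̂ ≠ t and 1/t̂ an eigenvalue of S. -/
theorem rabinowitz_global_bifurcation
    (E : Type*) [NormedAddCommGroup E] [NormedSpace ℝ E] [CompleteSpace E]
    (S : E →L[ℝ] E)
    (hScompact : ∀ s : Set E, Bornology.IsBounded s → IsCompact (closure (S '' s)))
    (t : ℝ) (ht : t ≠ 0)
    (heigen : Module.End.HasEigenvalue (S : E →ₗ[ℝ] E) (1 / t))
    (hodd : Odd (Module.finrank ℝ
      (Module.End.maxGenEigenspace (S : E →ₗ[ℝ] E) (1 / t))))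
    (G : E → E) (hGcont : Continuous G)
    (hGcompact : ∀ s : Set E, Bornology.IsBounded s → IsCompact (closure (G '' s)))
    (hGsmall : Tendsto (fun u : E => ‖G u‖ / ‖u‖) (𝓝[≠] (0 : E)) (𝓝 0))
    (Sig : Set (ℝ × E))
    (hSig : Sig = closure {p : ℝ × E | p.2 = p.1 • S p.2 + G p.2 ∧ p.2 ≠ 0})
    (C : Set (ℝ × E))
    (hC : C = connectedComponentIn (Sig ∪ {(t, (0 : E))}) (t, (0 : E))) :
    ¬ Bornology.IsBounded C ∨
      ∃ that : ℝ, that ≠ t ∧ (that, (0 : E)) ∈ C ∧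
        Module.End.HasEigenvalue (S : E →ₗ[ℝ] E) (1 / that) := by
  set N := Module.End.maxGenEigenspace (S : E →ₗ[ℝ] E) (1 / t) with hN
  have hNf : FiniteDimensional ℝ N := Module.finite_of_finrank_pos hodd.pos
  have hnt : Nontrivial E := by
    obtain ⟨v, hv⟩ := heigen.exists_hasEigenvector
    exact ⟨⟨v, 0, hv.2⟩⟩
  obtain ⟨hG0, hGs⟩ := bif_small G hGcont hGsmall
  have hSc : ∀ M : ℝ, ∃ k, IsCompact k ∧ ∀ u, ‖u‖ ≤ M → S u ∈ k := fun M =>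
    ⟨_, hScompact (Metric.closedBall 0 M) Metric.isBounded_closedBall,
      fun u hu => subset_closure ⟨u, by simpa using hu, rfl⟩⟩
  have hGc : ∀ M : ℝ, ∃ k, IsCompact k ∧ ∀ u, ‖u‖ ≤ M → G u ∈ k := fun M =>
    ⟨_, hGcompact (Metric.closedBall 0 M) Metric.isBounded_closedBall,
      fun u hu => subset_closure ⟨u, by simpa using hu, rfl⟩⟩
  have hSop : IsCompactOperator S :=
    (isCompactOperator_iff_isCompact_closure_image_closedBall S.toLinearMap one_pos).2
      (hScompact _ Metric.isBounded_closedBall)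
  have hSN : ∀ u ∈ N, S u ∈ N := fun u hu =>
    Module.End.mapsTo_maxGenEigenspace_of_comm (Commute.refl (S : E →ₗ[ℝ] E)) (1 / t) hu
  obtain ⟨P₀, hP₀⟩ : N.ClosedComplemented := Submodule.ClosedComplemented.of_finiteDimensional N
  let P : E →L[ℝ] E := N.subtypeL ∘L P₀
  have hPN : ∀ u, P u ∈ N := fun u => (P₀ u).2
  have hP : ∀ u ∈ N, P u = u := fun u hu => by
    have := hP₀ ⟨u, hu⟩
    exact congrArg Subtype.val this
  let Q : E →L[ℝ] E := 1 - P
  have hQ : ∀ u, Q u = u - P u := fun u => rfl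
  have hQN : ∀ u ∈ N, Q u = 0 := fun u hu => by rw [hQ, hP u hu, sub_self]
  have hPQ : ∀ u, Q (Q u) = Q u := fun u => by
    rw [hQ u, map_sub, hQN _ (hPN u), sub_zero, hQ]
  have hgen : ∀ v, v - t • S v ∈ N → v ∈ N := by
    intro v hv
    rw [hN, Module.End.mem_maxGenEigenspace] at hv ⊢
    obtain ⟨k, hk⟩ := hv
    refine ⟨k + 1, ?_⟩
    rw [pow_succ, Module.End.mul_apply]
    have : ((S : E →ₗ[ℝ] E) - (1 / t) • (1 : Module.End ℝ E)) v = (-(1 / t)) • (v - t • S v) := by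
      simp only [LinearMap.sub_apply, LinearMap.smul_apply, Module.End.one_apply, smul_sub, smul_smul]
      have : -(1 / t) * t = -1 := by field_simp
      rw [this]
      simp
      abel
    rw [this, map_smul, hk, smul_zero]
  -- the operator L
  let K : E →L[ℝ] E := t • (S ∘L Q)
  have hK : IsCompactOperator K := (hSop.comp_clm Q).smul t
  have hKe : ¬ Module.End.HasEigenvalue (K : E →ₗ[ℝ] E) 1 := by
    intro h
    obtain ⟨v, hv, hv0⟩ := h.exists_hasEigenvector
    rw [Module.End.mem_eigenspace_iff, one_smul] at hv
    have hv' : t • S (Q v) = v := hv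
    have h1 : Q v - t • S (Q v) ∈ N := by
      rw [hv', hQ, sub_sub_cancel_left]
      exact N.neg_mem (hPN v)
    have h2 : Q v = 0 := by rw [← hPQ, hQN _ (hgen _ h1)]
    rw [h2, map_zero, smul_zero] at hv'
    exact hv0 hv'.symm
  have hunit := (hK.hasEigenvalue_or_mem_resolventSet one_ne_zero).resolve_left hKe
  rw [spectrum.mem_resolventSet_iff, map_one] at hunit
  obtain ⟨L, hL⟩ := hunit
  have hLu : ∀ u, (L : E →L[ℝ] E) u = u - t • S (Q u) := fun u => by rw [hL]; rfl
  let J : E →L[ℝ] E := ((L⁻¹ : (E →L[ℝ] E)ˣ) : E →L[ℝ] E)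
  have hJL : ∀ u, J (u - t • S (Q u)) = u := fun u => by
    rw [← hLu]
    exact congrArg (fun f : E →L[ℝ] E => f u) L.inv_mul
  have hLJ : ∀ u, (L : E →L[ℝ] E) (J u) = u := fun u =>
    congrArg (fun f : E →L[ℝ] E => f u) L.mul_inv
  have hJ0 : ∀ u, J u = 0 → u = 0 := fun u hu => by rw [← hLJ u, hu, map_zero]
  have hJN : ∀ u ∈ N, J u = u := fun u hu => by
    have := hJL u
    rwa [hQN u hu, map_zero, smul_zero, sub_zero] at this
  let T : E →L[ℝ] E := S ∘L P
  let D : E →L[ℝ] E := J ∘L S ∘L Q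
  have hTN : ∀ u, T u ∈ N := fun u => hSN _ (hPN u)
  have heqv : ∀ (s : ℝ) (u g : E), J (u - (s • S u + g)) =
      u - (s • T u + ((s - t) • D u + J g)) := by
    intro s u g
    have e : u - (s • S u + g) = (u - t • S (Q u)) - (s • S (P u) + ((s - t) • S (Q u) + g)) := by
      rw [hQ, map_sub]; module
    rw [e, map_sub, hJL, map_add, map_add, map_smul, map_smul, hJN _ (hSN _ (hPN u))]
    rfl
  have hT : ∀ s : ℝ, s ≠ t → ∀ u, u - s • T u = 0 → u = 0 := by
    intro s hst u hu
    have hu' : u = s • T u := sub_eq_zero.1 hu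
    by_cases hs : s = 0
    · rw [hs, zero_smul] at hu'; exact hu'
    have huN : u ∈ N := by rw [hu']; exact N.smul_mem _ (hTN u)
    have hTS : T u = S u := by show S (P u) = S u; rw [hP u huN]
    rw [hTS] at hu'
    have h1 : u ∈ Module.End.genEigenspace (S : E →ₗ[ℝ] E) (1 / s) 1 := by
      rw [Module.End.mem_eigenspace_iff]
      show S u = (1 / s) • u
      nth_rewrite 2 [hu']
      rw [smul_smul, one_div_mul_cancel hs, one_smul]
    have h2 := Module.End.disjoint_genEigenspace (S : E →ₗ[ℝ] E) (μ₁ := 1 / s) (μ₂ := 1 / t)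
      (by intro h; apply hst; simpa using h) 1 ⊤
    exact Submodule.disjoint_def.1 h2 u h1 huN
  set a := ‖Q ∘L J ∘L S‖ with ha
  have ha0 : 0 ≤ a := norm_nonneg _
  set ε₀ : ℝ := 1 / (2 * (a + 1)) with hε₀def
  have hε₀ : 0 < ε₀ := by positivity
  have hlin : ∀ s : ℝ, s ≠ t → |s - t| ≤ ε₀ → ∀ σ ∈ Set.Icc (0:ℝ) 1, ∀ u,
      u - (s • T u + (σ * (s - t)) • D u) = 0 → u = 0 := by
    intro s hst hs σ hσ u hu
    have h1 : Q u = (σ * (s - t)) • (Q ∘L J ∘L S) (Q u) := by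
      have := congrArg Q hu
      rw [map_sub, map_add, map_smul, map_smul, hQN _ (hTN u), smul_zero, zero_add, map_zero,
        sub_eq_zero] at this
      exact this
    have h2 : ‖Q u‖ ≤ (1 / 2) * ‖Q u‖ := by
      have h3 : ‖Q u‖ = |σ * (s - t)| * ‖(Q ∘L J ∘L S) (Q u)‖ := by
        nth_rewrite 1 [h1]
        rw [norm_smul, Real.norm_eq_abs]
      have h4 : |σ * (s - t)| ≤ ε₀ := by
        rw [abs_mul, abs_of_nonneg hσ.1]
        calc σ * |s - t| ≤ 1 * |s - t| := mul_le_mul_of_nonneg_right hσ.2 (abs_nonneg _)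
          _ ≤ ε₀ := by rw [one_mul]; exact hs
      have h5 := (Q ∘L J ∘L S).le_opNorm (Q u)
      rw [← ha] at h5
      calc ‖Q u‖ = _ := h3
        _ ≤ ε₀ * (a * ‖Q u‖) := mul_le_mul h4 h5 (norm_nonneg _) hε₀.le
        _ = (ε₀ * a) * ‖Q u‖ := by ring
        _ ≤ (1 / 2) * ‖Q u‖ := by
          apply mul_le_mul_of_nonneg_right _ (norm_nonneg _)
          rw [hε₀def, div_mul_eq_mul_div, div_le_div_iff₀ (by positivity) (by norm_num)]
          linarith
    have h3 : Q u = 0 := by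
      rw [← norm_eq_zero]
      have := norm_nonneg (Q u)
      linarith
    have h4 : D u = 0 := by
      show J (S (Q u)) = 0
      rw [h3, map_zero, map_zero]
    rw [h4, smul_zero, add_zero] at hu
    exact hT s hst u hu
  have hlin' : ∀ s : ℝ, s ≠ t → |s - t| ≤ ε₀ → ∀ u, u = s • S u → u = 0 := by
    intro s hst hs u hu
    refine hlin s hst hs 1 ⟨zero_le_one, le_rfl⟩ u ?_
    have := heqv s u 0
    rw [add_zero, ← hu, sub_self, map_zero, add_zero] at this
    rw [one_mul]; exact this.symm
  -- topology
  set Z : Set (ℝ × E) := Sig ∪ {(t, (0 : E))} with hZdef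
  have hSigc : IsClosed Sig := by rw [hSig]; exact isClosed_closure
  have hZc : IsClosed Z := hSigc.union isClosed_singleton
  have hZsol : ∀ x ∈ Z, x.2 = x.1 • S x.2 + G x.2 := by
    have h1 : Sig ⊆ {x : ℝ × E | x.2 = x.1 • S x.2 + G x.2} := by
      rw [hSig]
      exact closure_minimal (fun x hx => hx.1) (isClosed_eq (by fun_prop) (by fun_prop))
    rintro x (hx | hx)
    · exact h1 hx
    · rw [Set.mem_singleton_iff.1 hx]; simp [hG0]
  have hZ : ∀ B : Set (ℝ × E), IsClosed B → Bornology.IsBounded B → IsCompact (B ∩ Z) := by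
    intro B hB hBb
    obtain ⟨M, hM⟩ := hBb.exists_norm_le
    obtain ⟨kS, hkS, hkS'⟩ := hSc M
    obtain ⟨kG, hkG, hkG'⟩ := hGc M
    have hk : IsCompact ((fun q : ℝ × (E × E) => q.1 • q.2.1 + q.2.2) ''
      (Metric.closedBall 0 M ×ˢ (kS ×ˢ kG))) :=
      ((isCompact_closedBall _ _).prod (hkS.prod hkG)).image (by fun_prop)
    refine ((isCompact_closedBall (0 : ℝ) M).prod hk).of_isClosed_subset (hB.inter hZc) ?_
    rintro x ⟨hxB, hxZ⟩
    have hx := hM x hxB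
    have hx1 : x.1 ∈ Metric.closedBall (0 : ℝ) M := by
      rw [mem_closedBall_zero_iff]; exact (norm_fst_le x).trans hx
    refine ⟨hx1, ?_⟩
    rw [hZsol x hxZ]
    exact ⟨(x.1, (S x.2, G x.2)), ⟨hx1, hkS' _ ((norm_snd_le x).trans hx),
      hkG' _ ((norm_snd_le x).trans hx)⟩, rfl⟩
  have hnec : ∀ s, s ≠ t → (s, (0 : E)) ∈ Z → ∃ u : E, u ≠ 0 ∧ u = s • S u := by
    intro s hst hs
    rcases hs with hs | hs
    · rw [hSig] at hs
      exact bif_nec S hSc G hGs s hs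
    · exact absurd (Prod.ext_iff.1 (Set.mem_singleton_iff.1 hs)).1 hst
  by_contra! hcon
  obtain ⟨hCb, hno⟩ := hcon
  rw [hC] at hCb hno
  let F : Set (ℝ × E) := {x | ε₀ ≤ |x.1 - t|} ∩ {x | x.2 = 0}
  have hF : IsClosed F := (isClosed_le (by fun_prop) (by fun_prop)).inter
    (isClosed_eq (by fun_prop) (by fun_prop))
  obtain ⟨Ω, hΩ, hΩb, htΩ, hΩF, hΩZ⟩ := bif_sep Z F (t, 0) (Or.inr rfl) hZ hZc hF hCb (by
    rw [Set.eq_empty_iff_forall_notMem]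
    rintro ⟨s, u⟩ ⟨h1, h2, h3⟩
    have h3' : u = 0 := h3
    have h2' : ε₀ ≤ |s - t| := h2
    subst h3'
    have hst : s ≠ t := by
      intro h; rw [h, sub_self, abs_zero] at h2'; linarith
    obtain ⟨u, hu0, hu⟩ := hnec s hst (connectedComponentIn_subset _ _ h1)
    refine hno s hst h1 (Module.End.hasEigenvalue_of_hasEigenvector (x := u) ⟨?_, hu0⟩)
    have hs : s ≠ 0 := by
      intro h; rw [h, zero_smul] at hu; exact hu0 hu
    rw [Module.End.mem_eigenspace_iff]
    show S u = (1 / s) • u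
    nth_rewrite 2 [hu]
    rw [smul_smul, one_div_mul_cancel hs, one_smul])
  have hback : ∀ x : ℝ × E, x.2 ≠ 0 →
      x.2 - (x.1 • T x.2 + ((x.1 - t) • D x.2 + J (G x.2))) = 0 → x ∈ Z := by
    intro x hx0 h
    rw [← heqv] at h
    left
    rw [hSig]
    exact subset_closure ⟨sub_eq_zero.1 (hJ0 _ h), hx0⟩
  refine bif_core T D N hTN ?_ (fun u => J (G u)) (by fun_prop) ?_ ?_ t ε₀ hε₀ hT hlin ?_ Ω hΩ hΩb
    htΩ ?_ ?_
  · intro M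
    obtain ⟨k, hk, hk'⟩ := hSc (‖Q‖ * M)
    refine ⟨J '' k, hk.image J.continuous, fun u hu => ⟨_, hk' (Q u) ?_, rfl⟩⟩
    exact (Q.le_opNorm u).trans (mul_le_mul_of_nonneg_left hu (norm_nonneg _))
  · intro M
    obtain ⟨k, hk, hk'⟩ := hGc M
    exact ⟨J '' k, hk.image J.continuous, fun u hu => ⟨_, hk' u hu, rfl⟩⟩
  · intro c hc
    obtain ⟨r, hr, hr'⟩ := hGs (c / (‖J‖ + 1)) (by positivity)
    refine ⟨r, hr, fun u hu => ?_⟩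
    have h1 := hr' u hu
    have h2 := J.le_opNorm (G u)
    have h3 : (‖J‖ + 1) * ‖G u‖ ≤ c * ‖u‖ := by
      have := mul_le_mul_of_nonneg_left h1 (by positivity : 0 ≤ ‖J‖ + 1)
      refine this.trans (le_of_eq ?_)
      field_simp
    have := norm_nonneg (G u)
    linarith
  · intro W _ hNW A hA ε hε
    exact bif_hdet S P t ht N hN hodd hPN hP hSN W hNW A hA ε hε
  · intro x hx hx0 h
    exact hΩZ x hx (hback x hx0 h)
  · intro ε hε
    have hcpt : IsCompact ((closure Ω ∩ {x | ε ≤ |x.1 - t|}) ∩ Z) :=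
      hZ _ (isClosed_closure.inter (isClosed_le (by fun_prop) (by fun_prop)))
        (hΩb.closure.subset Set.inter_subset_left)
    have hne0 : ∀ x ∈ (closure Ω ∩ {x | ε ≤ |x.1 - t|}) ∩ Z, x.2 ≠ 0 := by
      rintro ⟨s, u⟩ ⟨⟨h1, h2⟩, h3⟩ h0
      have h0' : u = 0 := h0
      have h2' : ε ≤ |s - t| := h2
      subst h0'
      have hst : s ≠ t := by
        intro h; rw [h, sub_self, abs_zero] at h2'; linarith
      obtain ⟨v, hv0, hv⟩ := hnec s hst h3
      rcases le_total |s - t| ε₀ with h | h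
      · exact hv0 (hlin' s hst h v hv)
      · have : (s, (0 : E)) ∈ closure Ω ∩ F := ⟨h1, h, rfl⟩
        rw [hΩF] at this
        exact this
    rcases Set.eq_empty_or_nonempty ((closure Ω ∩ {x | ε ≤ |x.1 - t|}) ∩ Z) with he | hne
    · refine ⟨1, one_pos, fun x hx hx0 h hxε => ?_⟩
      have : x ∈ (closure Ω ∩ {x | ε ≤ |x.1 - t|}) ∩ Z := ⟨⟨hx, hxε⟩, hback x hx0 h⟩
      rw [he] at this
      exact this.elim
    · obtain ⟨y, hy, hmin⟩ := hcpt.exists_isMinOn hne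
        (f := fun x : ℝ × E => ‖x.2‖) (by fun_prop)
      refine ⟨‖y.2‖, norm_pos_iff.2 (hne0 y hy), fun x hx hx0 h hxε => ?_⟩
      exact hmin ⟨⟨hx, hxε⟩, hback x hx0 h⟩
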